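/- arXiv:1012.1236 — 8 statements merged into one kernel-verified Lean document; each statement's English description precedes it below -/
import Mathlib

section
/- (Singular Gronwall lemma; Lemma 5.3 of the paper.) Fix α, β ≥ 0 with α + β < 1. Then there exists a constant c = c(α,β) > 0, depending only on α and β, such that for every a, b > 0 and every continuous function x : [0,∞) → [0,∞) satisfying x(t) ≤ a + b ∫₀ᵗ (t−s)^{−α} s^{−β} x(s) ds for all t ≥ 0, one has x(t) ≤ a · c · exp( c · b^{1/(1−α−β)} · t ) for all t ≥ 0. -/
/-!
For a rate `r > 0`, estimate `x` in the weighted norm `sup e^(-rt) x t` over a compact interval.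
Up to the factor `e^(rt)`, the integral operator has weighted kernel
`(t-s)^(-α) s^(-β) e^(-r(t-s))`. With `g u = u^(-(α+β)) e^(-ru)`, this kernel is at most `g s` when
`s ≤ t - s` and at most `g (t-s)` otherwise (`kernel_le`), so its integral over `(0,t)` is at most
`2 ∫₀^∞ g = 2 Γ(1-α-β) r^(-(1-α-β))`, uniformly in `t` (`integral_majorant_le`). Taking `r` to be a
suitable multiple of `b^(1/(1-α-β))` makes the operator norm, including the factor `b`, equal to
`1/2`; evaluating the hypothesis at a maximum point of `e^(-rt) x t` then bounds that maximum by
`2a`.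
-/

open MeasureTheory intervalIntegral Real
open Set

/-- The Gamma density shape `u ↦ u^(-δ) e^(-ru)` which dominates the weighted kernel. -/
noncomputable def gammaProfile (δ r u : ℝ) : ℝ := u ^ (-δ) * Real.exp (-(r * u))

lemma gammaProfile_nonneg {δ r u : ℝ} (hu : 0 ≤ u) : 0 ≤ gammaProfile δ r u :=
  mul_nonneg (Real.rpow_nonneg hu _) (Real.exp_pos _).le

lemma integral_Ioi_gammaProfile {δ r : ℝ} (hδ : δ < 1) (hr : 0 < r) :
    ∫ u in Ioi (0 : ℝ), gammaProfile δ r u = r ^ (-(1 - δ)) * Real.Gamma (1 - δ) := by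
  have h := Real.integral_rpow_mul_exp_neg_mul_Ioi (a := 1 - δ) (by linarith) hr
  rw [show 1 - δ - 1 = -δ by ring, one_div, Real.inv_rpow hr.le, ← Real.rpow_neg hr.le] at h
  exact h

lemma integrableOn_Ioi_gammaProfile {δ r : ℝ} (hδ : δ < 1) (hr : 0 < r) :
    IntegrableOn (gammaProfile δ r) (Ioi 0) := by
  -- A non-integrable function would have integral `0`, but the integral is positive.
  by_contra h
  have h0 := integral_undef h
  rw [integral_Ioi_gammaProfile hδ hr] at h0
  have := mul_pos (Real.rpow_pos_of_pos hr (-(1 - δ))) (Real.Gamma_pos_of_pos (s := 1 - δ)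
    (by linarith))
  linarith

lemma intervalIntegrable_gammaProfile {δ r t : ℝ} (hδ : δ < 1) (hr : 0 < r) (ht : 0 ≤ t) :
    IntervalIntegrable (gammaProfile δ r) volume 0 t :=
  (intervalIntegrable_iff_integrableOn_Ioc_of_le ht).2
    ((integrableOn_Ioi_gammaProfile hδ hr).mono_set Ioc_subset_Ioi_self)

lemma intervalIntegrable_gammaProfile_sub {δ r t : ℝ} (hδ : δ < 1) (hr : 0 < r) (ht : 0 ≤ t) :
    IntervalIntegrable (fun s => gammaProfile δ r (t - s)) volume 0 t := by
  have := (intervalIntegrable_gammaProfile hδ hr ht).comp_sub_left t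
  simpa using this.symm

lemma integral_majorant_le {δ r t : ℝ} (hδ : δ < 1) (hr : 0 < r) (ht : 0 ≤ t) :
    ∫ s in (0 : ℝ)..t, (gammaProfile δ r s + gammaProfile δ r (t - s)) ≤
      2 * Real.Gamma (1 - δ) * r ^ (-(1 - δ)) := by
  rw [intervalIntegral.integral_add (intervalIntegrable_gammaProfile hδ hr ht)
      (intervalIntegrable_gammaProfile_sub hδ hr ht),
    intervalIntegral.integral_comp_sub_left (gammaProfile δ r) t, sub_self, sub_zero,
    intervalIntegral.integral_of_le ht]
  have h : ∫ u in Ioc 0 t, gammaProfile δ r u ≤ ∫ u in Ioi 0, gammaProfile δ r u := by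
    refine setIntegral_mono_set (integrableOn_Ioi_gammaProfile hδ hr) ?_
      Ioc_subset_Ioi_self.eventuallyLE
    filter_upwards [ae_restrict_mem measurableSet_Ioi] with u hu
    exact gammaProfile_nonneg (le_of_lt hu)
  rw [integral_Ioi_gammaProfile hδ hr] at h
  linarith

lemma kernel_le {α β r s t : ℝ} (hα : 0 ≤ α) (hβ : 0 ≤ β) (hr : 0 ≤ r) (hs : 0 < s)
    (hst : s < t) :
    (t - s) ^ (-α) * s ^ (-β) * Real.exp (-(r * (t - s))) ≤
      gammaProfile (α + β) r s + gammaProfile (α + β) r (t - s) := by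
  have hts : 0 < t - s := sub_pos.2 hst
  have h₁ := gammaProfile_nonneg (δ := α + β) (r := r) hs.le
  have h₂ := gammaProfile_nonneg (δ := α + β) (r := r) hts.le
  rcases le_total s (t - s) with h | h
  · refine le_trans ?_ (le_add_of_nonneg_right h₂)
    unfold gammaProfile
    rw [neg_add, Real.rpow_add hs]
    gcongr ?_ * _ * Real.exp (-(r * ?_))
    exact Real.rpow_le_rpow_of_nonpos hs h (by linarith)
  · refine le_trans ?_ (le_add_of_nonneg_left h₁)
    unfold gammaProfile
    rw [neg_add, Real.rpow_add hts]
    gcongr _ * ?_ * _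
    exact Real.rpow_le_rpow_of_nonpos hts h (by linarith)

/-- The integral operator maps functions bounded by `M e^(rs)` to functions bounded by
`2 Γ(1-α-β) r^(-(1-α-β)) M e^(rt)`. -/
lemma integral_kernel_mul_le {α β r t M : ℝ} (hα : 0 ≤ α) (hβ : 0 ≤ β) (hαβ : α + β < 1)
    (hr : 0 < r) (ht : 0 ≤ t) (hM : 0 ≤ M) {x : ℝ → ℝ} (hx0 : ∀ s, 0 ≤ s → 0 ≤ x s)
    (hx : ∀ s ∈ Icc 0 t, x s ≤ M * Real.exp (r * s)) :
    ∫ s in (0 : ℝ)..t, (t - s) ^ (-α) * s ^ (-β) * x s ≤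
      M * Real.exp (r * t) * (2 * Real.Gamma (1 - (α + β)) * r ^ (-(1 - (α + β)))) := by
  refine le_trans ?_ (mul_le_mul_of_nonneg_left (integral_majorant_le hαβ hr ht)
    (mul_nonneg hM (Real.exp_pos _).le))
  rw [← intervalIntegral.integral_const_mul, intervalIntegral.integral_of_le ht,
    intervalIntegral.integral_of_le ht, integral_Ioc_eq_integral_Ioo, integral_Ioc_eq_integral_Ioo]
  have hint := ((intervalIntegrable_gammaProfile hαβ hr ht).add
    (intervalIntegrable_gammaProfile_sub hαβ hr ht)).const_mul (M * Real.exp (r * t))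
  refine integral_mono_of_nonneg ?_
    (((intervalIntegrable_iff_integrableOn_Ioo_of_le ht).1 hint)) ?_
  · filter_upwards [ae_restrict_mem measurableSet_Ioo] with s hs
    exact mul_nonneg (mul_nonneg (Real.rpow_nonneg (sub_nonneg.2 hs.2.le) _)
      (Real.rpow_nonneg hs.1.le _)) (hx0 s hs.1.le)
  · filter_upwards [ae_restrict_mem measurableSet_Ioo] with s hs
    have hk : 0 ≤ (t - s) ^ (-α) * s ^ (-β) :=
      mul_nonneg (Real.rpow_nonneg (sub_nonneg.2 hs.2.le) _) (Real.rpow_nonneg hs.1.le _)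
    calc (t - s) ^ (-α) * s ^ (-β) * x s
        ≤ (t - s) ^ (-α) * s ^ (-β) * (M * Real.exp (r * s)) :=
          mul_le_mul_of_nonneg_left (hx s ⟨hs.1.le, hs.2.le⟩) hk
      _ = M * Real.exp (r * t) *
            ((t - s) ^ (-α) * s ^ (-β) * Real.exp (-(r * (t - s)))) := by
          rw [show r * s = r * t + -(r * (t - s)) by ring, Real.exp_add]
          ring
      _ ≤ _ := mul_le_mul_of_nonneg_left (kernel_le hα hβ hr.le hs.1 hs.2)
          (mul_nonneg hM (Real.exp_pos _).le)

/-- **Singular Gronwall lemma** (Lemma 5.3 of Hairer–Weber, "Rough Burgers-like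
equations with multiplicative noise").  Fix `α, β ≥ 0` with `α + β < 1`.  Then there
is a constant `c = c(α, β) > 0` such that for all `a, b > 0` and every continuous
nonnegative function `x : [0,∞) → [0,∞)` satisfying
`x t ≤ a + b ∫₀ᵗ (t-s)^(-α) s^(-β) x s ds` for all `t ≥ 0`, one has
`x t ≤ a c exp(c b^(1/(1-α-β)) t)` for all `t ≥ 0`. -/
theorem singular_gronwall (α β : ℝ) (hα : 0 ≤ α) (hβ : 0 ≤ β) (hαβ : α + β < 1) :
    ∃ c : ℝ, 0 < c ∧
      ∀ (a b : ℝ), 0 < a → 0 < b →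
        ∀ x : ℝ → ℝ, ContinuousOn x (Set.Ici (0 : ℝ)) →
          (∀ t : ℝ, 0 ≤ t → 0 ≤ x t) →
          (∀ t : ℝ, 0 ≤ t →
            x t ≤ a + b * ∫ s in (0 : ℝ)..t, (t - s) ^ (-α) * s ^ (-β) * x s) →
          ∀ t : ℝ, 0 ≤ t → x t ≤ a * c * Real.exp (c * b ^ (1 / (1 - α - β)) * t) := by
  have hγ : 0 < 1 - (α + β) := by linarith
  rw [show 1 - α - β = 1 - (α + β) by ring]
  set K := 2 * Real.Gamma (1 - (α + β)) with hK
  have hKpos : 0 < K := mul_pos two_pos (Real.Gamma_pos_of_pos hγ)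
  set C := (2 * K) ^ (1 / (1 - (α + β))) with hC
  refine ⟨max 2 C, lt_max_of_lt_left two_pos, ?_⟩
  intro a b ha hb x hxc hx0 hx T hT
  -- The rate for which the operator norm `b * (K * r ^ (-(1 - (α + β))))` is `1/2`.
  set r := C * b ^ (1 / (1 - (α + β))) with hr_def
  have hr : 0 < r := mul_pos (Real.rpow_pos_of_pos (by positivity) _) (Real.rpow_pos_of_pos hb _)
  have hrpow : b * (K * r ^ (-(1 - (α + β)))) = 1 / 2 := by
    rw [hr_def, hC, ← Real.mul_rpow (by positivity) hb.le, ← Real.rpow_mul (by positivity),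
      show 1 / (1 - (α + β)) * -(1 - (α + β)) = -1 by field_simp, Real.rpow_neg_one]
    field_simp
  have hcont : ContinuousOn (fun s => x s * Real.exp (-(r * s))) (Icc 0 T) :=
    (hxc.mono Icc_subset_Ici_self).mul (by fun_prop)
  obtain ⟨t₀, ht₀, hmax⟩ := isCompact_Icc.exists_isMaxOn (nonempty_Icc.2 hT) hcont
  set M := x t₀ * Real.exp (-(r * t₀)) with hM_def
  have hM : 0 ≤ M := mul_nonneg (hx0 t₀ ht₀.1) (Real.exp_pos _).le
  have hbound : ∀ s ∈ Icc 0 T, x s ≤ M * Real.exp (r * s) := by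
    intro s hs
    have h : x s * Real.exp (-(r * s)) ≤ M := hmax hs
    rwa [Real.exp_neg, ← div_eq_mul_inv, div_le_iff₀ (Real.exp_pos _)] at h
  have heq : x t₀ = M * Real.exp (r * t₀) := by
    rw [hM_def, mul_assoc, ← Real.exp_add, neg_add_cancel, Real.exp_zero, mul_one]
  have hM2 : M ≤ 2 * a := by
    have h₁ := hx t₀ ht₀.1
    have h₂ := mul_le_mul_of_nonneg_left (integral_kernel_mul_le hα hβ hαβ hr ht₀.1 hM hx0
      (fun s hs => hbound s ⟨hs.1, hs.2.trans ht₀.2⟩)) hb.le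
    have h₃ : b * (M * Real.exp (r * t₀) * (K * r ^ (-(1 - (α + β))))) =
        M * Real.exp (r * t₀) * (1 / 2) := by rw [← hrpow]; ring
    rw [h₃] at h₂
    have h₄ : M ≤ M * Real.exp (r * t₀) :=
      le_mul_of_one_le_right hM (Real.one_le_exp (mul_nonneg hr.le ht₀.1))
    linarith
  have hbp : 0 ≤ b ^ (1 / (1 - (α + β))) := Real.rpow_nonneg hb.le _
  calc x T ≤ M * Real.exp (r * T) := hbound T ⟨hT, le_rfl⟩
    _ ≤ a * max 2 C * Real.exp (max 2 C * b ^ (1 / (1 - (α + β))) * T) := by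
      have h₁ : M ≤ a * max 2 C := by
        have := mul_le_mul_of_nonneg_left (le_max_left 2 C) ha.le
        linarith
      have h₂ : r ≤ max 2 C * b ^ (1 / (1 - (α + β))) :=
        mul_le_mul_of_nonneg_right (le_max_right 2 C) hbp
      exact mul_le_mul h₁ (Real.exp_le_exp.2 (mul_le_mul_of_nonneg_right h₂ hT))
        (Real.exp_pos _).le (hM.trans h₁)
end

section
/- (Closed form of the iterated singular kernels in the proof of the Gronwall lemma.) Let α, β ∈ [0,1) with α + β < 1 and b > 0. Define A₀(t) = 1 and recursively A_{n+1}(t) = b ∫₀ᵗ (t−s)^{−α} s^{−β} A_n(s) ds. Then for every n ≥ 0 and every t > 0, A_n(t) = ( b · t^{1−α−β} · Γ(1−α) )ⁿ · ∏_{i=1}^{n} Γ( i − (i−1)α − iβ ) / Γ( i+1 − iα − iβ ), where Γ denotes the Gamma function. -/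
/-!
By induction, `A n s` is a constant multiple of `s ^ (n * (1 - α - β))` on `s > 0`, so each step of
the recursion is an Euler beta integral scaled to `[0, t]`,
`∫ s in 0..t, (t - s) ^ (u - 1) * s ^ (v - 1) = t ^ (u + v - 1) * (Γ u * Γ v / Γ (u + v))`,
with `u = 1 - α` and `v = 1 - β + n * (1 - α - β)`; the latter is the argument of the numerator of
the new factor (index `n + 1`), and `u + v` is that of its denominator.
-/

open MeasureTheory intervalIntegral Real

/-- The beta integral over `[0, t]`, transferred to real powers from the complex one. -/
lemma integral_sub_rpow_mul_rpow {u v t : ℝ} (hu : 0 < u) (hv : 0 < v) (ht : 0 < t) :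
    ∫ s in (0 : ℝ)..t, (t - s) ^ (u - 1) * s ^ (v - 1) =
      t ^ (u + v - 1) * (Real.Gamma u * Real.Gamma v / Real.Gamma (u + v)) := by
  apply Complex.ofReal_injective
  rw [← intervalIntegral.integral_ofReal]
  have h := Complex.betaIntegral_scaled (v : ℂ) (u : ℂ) ht
  rw [Complex.betaIntegral_eq_Gamma_mul_div _ _ (by simpa using hv) (by simpa using hu)] at h
  have e : ∫ s in (0 : ℝ)..t, (((t - s) ^ (u - 1) * s ^ (v - 1) : ℝ) : ℂ) =
      ∫ s in (0 : ℝ)..t, (s : ℂ) ^ ((v : ℂ) - 1) * ((t : ℂ) - s) ^ ((u : ℂ) - 1) := by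
    refine intervalIntegral.integral_congr fun s hs => ?_
    rw [Set.uIcc_of_le ht.le] at hs
    rw [Complex.ofReal_mul, Complex.ofReal_cpow (sub_nonneg.2 hs.2), Complex.ofReal_cpow hs.1]
    push_cast
    ring
  rw [e, h, Complex.ofReal_mul, Complex.ofReal_cpow ht.le]
  push_cast [← Complex.Gamma_ofReal]
  rw [add_comm (v : ℂ) u, mul_comm (Complex.Gamma v)]

/-- **Closed form of the iterated singular kernels** in the proof of the singular
Gronwall lemma (Lemma 5.3 of Hairer–Weber).  Let `α, β ∈ [0, 1)` with `α + β < 1` and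
`b > 0`.  Define `A₀(t) = 1` and `A_{n+1}(t) = b ∫₀ᵗ (t-s)^(-α) s^(-β) A_n(s) ds`.
Then for every `n ≥ 0` and `t > 0`,
`A_n(t) = (b t^(1-α-β) Γ(1-α))ⁿ ∏_{i=1}^{n} Γ(i - (i-1)α - iβ) / Γ(i+1 - iα - iβ)`. -/
theorem iterated_singular_kernel_closed_form
    (α β b : ℝ) (hα : 0 ≤ α) (hα1 : α < 1) (hβ : 0 ≤ β) (hβ1 : β < 1)
    (hαβ : α + β < 1) (hb : 0 < b)
    (A : ℕ → ℝ → ℝ)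
    (hA0 : ∀ t : ℝ, A 0 t = 1)
    (hA : ∀ (n : ℕ) (t : ℝ),
      A (n + 1) t = b * ∫ s in (0 : ℝ)..t, (t - s) ^ (-α) * s ^ (-β) * A n s) :
    ∀ (n : ℕ) (t : ℝ), 0 < t →
      A n t = (b * t ^ (1 - α - β) * Real.Gamma (1 - α)) ^ n *
        ∏ i ∈ Finset.Icc 1 n,
          Real.Gamma ((i : ℝ) - ((i : ℝ) - 1) * α - (i : ℝ) * β) /
            Real.Gamma ((i : ℝ) + 1 - (i : ℝ) * α - (i : ℝ) * β) := by
  intro n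
  induction n with
  | zero => intro t _; simp [hA0]
  | succ n ih =>
    intro t ht
    rw [hA, Finset.prod_Icc_succ_top (by omega)]
    set P := ∏ i ∈ Finset.Icc 1 n,
          Real.Gamma ((i : ℝ) - ((i : ℝ) - 1) * α - (i : ℝ) * β) /
            Real.Gamma ((i : ℝ) + 1 - (i : ℝ) * α - (i : ℝ) * β)
    set v : ℝ := 1 - β + n * (1 - α - β) with hv
    have hv0 : 0 < v := by
      have : 0 ≤ (n : ℝ) * (1 - α - β) := mul_nonneg n.cast_nonneg (by linarith)
      linarith
    have e : ∫ s in (0 : ℝ)..t, (t - s) ^ (-α) * s ^ (-β) * A n s =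
        ∫ s in (0 : ℝ)..t, ((b * Real.Gamma (1 - α)) ^ n * P) *
          ((t - s) ^ ((1 - α) - 1) * s ^ (v - 1)) := by
      -- The formula for `A n s` is available only for `0 < s`, so the endpoint `0` is discarded.
      refine intervalIntegral.integral_congr_ae (Filter.Eventually.of_forall fun s hs => ?_)
      rw [Set.uIoc_of_le ht.le] at hs
      have h1 : s ^ (v - 1) = s ^ (-β) * (s ^ (1 - α - β)) ^ n := by
        rw [← Real.rpow_mul_natCast hs.1.le, ← Real.rpow_add hs.1]
        congr 1
        rw [hv]; ring
      rw [ih s hs.1, h1, show (1 - α) - 1 = -α by ring]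
      ring
    rw [e, intervalIntegral.integral_const_mul,
      integral_sub_rpow_mul_rpow (by linarith) hv0 ht]
    have h2 : t ^ (1 - α + v - 1) = (t ^ (1 - α - β)) ^ (n + 1) := by
      rw [← Real.rpow_mul_natCast ht.le]
      congr 1
      rw [hv]; push_cast; ring
    have h3 : ((n + 1 : ℕ) : ℝ) - (((n + 1 : ℕ) : ℝ) - 1) * α - ((n + 1 : ℕ) : ℝ) * β = v := by
      rw [hv]; push_cast; ring
    have h4 : ((n + 1 : ℕ) : ℝ) + 1 - ((n + 1 : ℕ) : ℝ) * α - ((n + 1 : ℕ) : ℝ) * β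
        = 1 - α + v := by
      rw [hv]; push_cast; ring
    rw [h2, h3, h4]
    ring
end

section
/- (Lemma 4.1(i): spatial regularity of the periodic heat kernel.) For every T > 0 there exists a constant C such that for all x, y ∈ [0,1] and all t ∈ (0,T]: ∫₀ᵗ ∫₀¹ ( p̂_{t−s}(x−z) − p̂_{t−s}(y−z) )² dz ds ≤ C |x − y|. -/
/-!
The estimate holds with `C = 1/2`, uniformly in `T`. By Poisson summation (in the form of the
functional equation relating `HurwitzZeta.evenKernel` and `HurwitzZeta.cosKernel`) the kernel has
the Fourier series `p̂_τ(u) = ∑ₙ exp(-4π²n²τ) exp(-2πinu)`, so Parseval's identity gives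
`∫₀¹ (p̂_τ(x-z) - p̂_τ(y-z))² dz = ∑ₙ exp(-8π²n²τ) (2 - 2 cos(2πn(x-y)))`
(`hasSum_integral_sq_sub`). Integrating the `n`-th term over `τ ∈ [0,t]` gives at most
`(2 - 2 cos(2πn(x-y))) / (8π²n²)`, and the sum of these bounds is, by the Fourier series of the
second Bernoulli polynomial, exactly `(|x-y| - |x-y|²) / 2` (`hasSum_two_sub_two_cos_div`).
-/

open MeasureTheory Real

/-- The Gaussian heat kernel `p_t(x) = (4πt)^{-1/2} exp(-x²/(4t))` on `ℝ`
(junk value `0` for `t ≤ 0`). -/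
noncomputable def gaussianHeatKernel (t x : ℝ) : ℝ :=
  (Real.sqrt (4 * Real.pi * t))⁻¹ * Real.exp (-(x ^ 2) / (4 * t))

/-- The 1-periodic heat kernel `p̂_t(x) = Σ_{k∈ℤ} p_t(x-k)`. -/
noncomputable def periodicHeatKernel (t x : ℝ) : ℝ :=
  ∑' k : ℤ, gaussianHeatKernel t (x - (k : ℝ))

/-- Fourier expansion of the periodic heat kernel. The sign in the exponent is chosen so that, for
`u = x - z`, the terms are multiples of `exp(2πinz)`. -/
lemma hasSum_periodicHeatKernel {τ : ℝ} (hτ : 0 < τ) (u : ℝ) :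
    HasSum (fun n : ℤ ↦ Complex.exp (2 * π * Complex.I * ((-u : ℝ) : ℂ) * n) *
      (rexp (-π * n ^ 2 * (4 * π * τ)) : ℂ)) (periodicHeatKernel τ u : ℂ) := by
  have hpos : 0 < 4 * π * τ := by positivity
  have h := HurwitzZeta.hasSum_int_evenKernel (-u) (one_div_pos.2 hpos)
  have hE : periodicHeatKernel τ u = HurwitzZeta.cosKernel ((-u : ℝ) : UnitAddCircle)
      (4 * π * τ) := by
    have h2 : periodicHeatKernel τ u =
        (√(4 * π * τ))⁻¹ * HurwitzZeta.evenKernel ((-u : ℝ) : UnitAddCircle)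
          (1 / (4 * π * τ)) := by
      rw [← (h.mul_left _).tsum_eq]
      unfold periodicHeatKernel gaussianHeatKernel
      congr! 4 with n
      field_simp
      ring
    rw [h2, HurwitzZeta.evenKernel_functional_equation, one_div_one_div, ← Real.sqrt_eq_rpow,
      Real.sqrt_div zero_le_one, Real.sqrt_one, one_div_one_div, inv_mul_cancel_left₀ (by positivity)]
  rw [hE]
  exact HurwitzZeta.hasSum_int_cosKernel (-u) hpos

/-- Parseval's identity for an absolutely convergent Fourier series on the circle. -/
lemma hasSum_sq_norm_of_summable {a : ℤ → ℂ} (ha : Summable fun n ↦ ‖a n‖) :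
    HasSum (fun n ↦ ‖a n‖ ^ 2)
      (∫ z in (0 : ℝ)..1, ‖∑' n : ℤ, a n * fourier n (z : UnitAddCircle)‖ ^ 2) := by
  have hs : Summable fun n : ℤ ↦ a n • (fourier n : C(UnitAddCircle, ℂ)) :=
    .of_norm (by simpa [norm_smul, fourier_norm] using ha)
  set f : C(UnitAddCircle, ℂ) := ∑' n : ℤ, a n • fourier n with hf
  have hfs : HasSum (fun n : ℤ ↦ a n • (fourier n : C(UnitAddCircle, ℂ))) f := hs.hasSum
  have hev (z : UnitAddCircle) : f z = ∑' n : ℤ, a n * fourier n z :=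
    (((ContinuousMap.evalCLM ℂ z).hasSum hfs).tsum_eq).symm
  have hcoef (n : ℤ) : fourierCoeff f n = a n := by
    rw [← fourierCoeff_toLp, ← fourierBasis_repr, HilbertBasis.repr_apply_apply]
    have h1 := (innerSL ℂ ((fourierBasis : HilbertBasis ℤ ℂ _) n)).hasSum
      ((ContinuousMap.toLp (E := ℂ) 2 AddCircle.haarAddCircle ℂ).hasSum hfs)
    refine h1.unique ?_
    convert hasSum_single n ?_ using 1
    · simp only [map_smul, innerSL_apply_apply, coe_fourierBasis]
      erw [orthonormal_iff_ite.1 orthonormal_fourier n n]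
      simp
    · intro m hm
      simp only [map_smul, innerSL_apply_apply, coe_fourierBasis]
      erw [orthonormal_iff_ite.1 orthonormal_fourier n m]
      simp [hm.symm]
  have h := hasSum_sq_fourierCoeff (ContinuousMap.toLp (E := ℂ) 2 AddCircle.haarAddCircle ℂ f)
  simp only [fourierCoeff_toLp, hcoef] at h
  convert h using 1
  rw [integral_congr_ae (g := fun t ↦ ‖f t‖ ^ 2)]
  · rw [AddCircle.integral_haarAddCircle]
    have := UnitAddCircle.intervalIntegral_preimage 0 (fun t ↦ ‖f t‖ ^ 2)
    simp only [zero_add] at this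
    simp only [hev] at this ⊢
    rw [this, inv_one, one_smul]
  · filter_upwards [ContinuousMap.coeFn_toLp (E := ℂ) (p := 2) (𝕜 := ℂ)
      AddCircle.haarAddCircle f] with t ht
    rw [ht]

lemma sq_norm_exp_sub_exp (α β : ℝ) :
    ‖Complex.exp (α * Complex.I) - Complex.exp (β * Complex.I)‖ ^ 2 = 2 - 2 * cos (α - β) := by
  rw [Complex.sq_norm, Complex.normSq_apply]
  simp only [Complex.sub_re, Complex.sub_im, Complex.exp_ofReal_mul_I_re,
    Complex.exp_ofReal_mul_I_im, Real.cos_sub]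
  nlinarith [Real.sin_sq_add_cos_sq α, Real.sin_sq_add_cos_sq β]

/-- The spatial integral at a fixed time, computed by Parseval's identity. -/
lemma hasSum_integral_sq_sub {τ : ℝ} (hτ : 0 < τ) (x y : ℝ) :
    HasSum (fun n : ℤ ↦ rexp (-(8 * π ^ 2 * n ^ 2) * τ) * (2 - 2 * cos (2 * π * n * (x - y))))
      (∫ z in (0 : ℝ)..1, (periodicHeatKernel τ (x - z) - periodicHeatKernel τ (y - z)) ^ 2) := by
  set a : ℤ → ℂ := fun n ↦ (rexp (-π * n ^ 2 * (4 * π * τ)) : ℂ) *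
    (Complex.exp ((-(2 * π * n * x) : ℝ) * Complex.I) -
      Complex.exp ((-(2 * π * n * y) : ℝ) * Complex.I)) with ha
  have hterm (n : ℤ) : ‖a n‖ ^ 2 =
      rexp (-(8 * π ^ 2 * n ^ 2) * τ) * (2 - 2 * cos (2 * π * n * (x - y))) := by
    rw [ha]
    simp only [norm_mul, mul_pow]
    rw [sq_norm_exp_sub_exp, Complex.norm_real, Real.norm_eq_abs, abs_of_pos (exp_pos _),
      ← Real.exp_nat_mul, ← Real.cos_neg]
    congr 2
    · push_cast
      ring
    · congr 2
      ring
  have hsum : Summable fun n ↦ ‖a n‖ := by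
    have h1 : Summable fun n : ℤ ↦ rexp (-π * n ^ 2 * (4 * π * τ)) := by
      refine (hasSum_periodicHeatKernel hτ 0).summable.norm.congr fun n ↦ ?_
      rw [norm_mul, Complex.norm_real, Real.norm_eq_abs, abs_of_pos (exp_pos _)]
      simp
    refine .of_nonneg_of_le (fun _ ↦ norm_nonneg _) (fun n ↦ ?_) (h1.mul_right 2)
    rw [ha]
    simp only [norm_mul]
    rw [Complex.norm_real, Real.norm_eq_abs, abs_of_pos (exp_pos _)]
    gcongr
    refine (norm_sub_le _ _).trans ?_
    rw [Complex.norm_exp_ofReal_mul_I, Complex.norm_exp_ofReal_mul_I]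
    norm_num
  have hint (z : ℝ) : ‖∑' n : ℤ, a n * fourier n (z : UnitAddCircle)‖ ^ 2 =
      (periodicHeatKernel τ (x - z) - periodicHeatKernel τ (y - z)) ^ 2 := by
    have h := (hasSum_periodicHeatKernel hτ (x - z)).sub (hasSum_periodicHeatKernel hτ (y - z))
    have : ∑' n : ℤ, a n * fourier n (z : UnitAddCircle) =
        ((periodicHeatKernel τ (x - z) - periodicHeatKernel τ (y - z) : ℝ) : ℂ) := by
      rw [Complex.ofReal_sub, ← h.tsum_eq]
      congr! 2 with n
      have hsplit (w : ℝ) : Complex.exp (2 * π * Complex.I * ((-(w - z) : ℝ) : ℂ) * n) =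
          Complex.exp ((-(2 * π * n * w) : ℝ) * Complex.I) *
            Complex.exp (2 * π * Complex.I * n * z) := by
        rw [← Complex.exp_add]
        congr 1
        push_cast
        ring
      rw [hsplit, hsplit, fourier_coe_apply, ha]
      simp only [Complex.ofReal_one, div_one]
      ring
    rw [this, Complex.norm_real, Real.norm_eq_abs, sq_abs]
  simpa only [hterm, hint] using hasSum_sq_norm_of_summable hsum

/-- The Fourier series of the second Bernoulli polynomial, evaluated at `0` and at `|h|` and
subtracted. The term `n = 0` is `0 / 0 = 0`. -/
lemma hasSum_two_sub_two_cos_div {h : ℝ} (hh : |h| ≤ 1) :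
    HasSum (fun n : ℤ ↦ (2 - 2 * cos (2 * π * n * h)) / (8 * π ^ 2 * n ^ 2))
      ((|h| - |h| ^ 2) / 2) := by
  have h1 := hasSum_one_div_pow_mul_fourier_mul_bernoulliFun le_rfl
    (⟨abs_nonneg h, hh⟩ : |h| ∈ Set.Icc (0 : ℝ) 1)
  have h0 := hasSum_one_div_pow_mul_fourier_mul_bernoulliFun le_rfl
    (⟨le_rfl, zero_le_one⟩ : (0 : ℝ) ∈ Set.Icc (0 : ℝ) 1)
  have h2 := (Complex.hasSum_re (h0.sub h1)).mul_left (1 / (4 * π ^ 2))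
  have : (-(2 * (π : ℂ) * Complex.I) ^ 2 / (Nat.factorial 2 : ℕ) * (bernoulliFun 2 0 : ℝ) -
      -(2 * (π : ℂ) * Complex.I) ^ 2 / (Nat.factorial 2 : ℕ) * (bernoulliFun 2 |h| : ℝ)) =
      ((2 * π ^ 2 * (|h| - |h| ^ 2) : ℝ) : ℂ) := by
    rw [mul_pow, Complex.I_sq, bernoulliFun_two, bernoulliFun_two]
    push_cast [Nat.factorial]
    ring
  rw [this, Complex.ofReal_re] at h2
  have hval : (|h| - |h| ^ 2) / 2 = 1 / (4 * π ^ 2) * (2 * π ^ 2 * (|h| - |h| ^ 2)) := by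
    field_simp
    ring
  rw [hval]
  refine h2.congr_fun fun n ↦ ?_
  have hre : (1 / (n : ℂ) ^ 2 * fourier n ((0 : ℝ) : UnitAddCircle) -
      1 / (n : ℂ) ^ 2 * fourier n ((|h| : ℝ) : UnitAddCircle)).re =
      1 / (n : ℝ) ^ 2 * (1 - cos (2 * π * n * |h|)) := by
    rw [fourier_coe_apply, fourier_coe_apply, ← mul_sub,
      show 2 * (π : ℂ) * Complex.I * n * (|h| : ℝ) / (1 : ℝ) =
        ((2 * π * n * |h| : ℝ) : ℂ) * Complex.I by push_cast; ring,
      show (1 / (n : ℂ) ^ 2) = ((1 / (n : ℝ) ^ 2 : ℝ) : ℂ) by push_cast; rfl,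
      Complex.re_ofReal_mul, Complex.sub_re, Complex.exp_ofReal_mul_I_re]
    simp
  have hcos : cos (2 * π * n * |h|) = cos (2 * π * n * h) := by
    rcases abs_choice h with e | e <;> rw [e]
    rw [mul_neg, cos_neg]
  rw [hre, hcos]
  rcases eq_or_ne n 0 with rfl | hn
  · simp
  · have : (n : ℝ) ≠ 0 := by exact_mod_cast hn
    field_simp
    ring

/-- Dropping the boundary term of `∫₀ᵗ exp(-l(t-s)) ds = (1 - exp(-lt)) / l`. -/
lemma integral_exp_neg_mul_sub_le {l t : ℝ} (hl : 0 < l) (ht : 0 ≤ t) :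
    ∫ s in Set.Ioc 0 t, rexp (-l * (t - s)) ≤ 1 / l := by
  rw [← intervalIntegral.integral_of_le ht,
    intervalIntegral.integral_eq_sub_of_hasDerivAt (f := fun s ↦ rexp (-l * (t - s)) / l)]
  · rw [← sub_div]
    gcongr
    simp only [sub_self, mul_zero, exp_zero]
    linarith [exp_pos (-l * (t - 0))]
  · intro s _
    have h := ((((hasDerivAt_id s).const_sub t).const_mul (-l)).exp).div_const l
    convert! h using 1
    field_simp
    simp only [id]
  · exact Continuous.intervalIntegrable (by fun_prop) _ _

/-- **Lemma 4.1(i)** of Hairer–Weber: spatial regularity of the periodic heat kernel.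
For every `T > 0` there is `C` such that for all `x, y ∈ [0,1]` and `t ∈ (0,T]`:
`∫₀ᵗ ∫₀¹ (p̂_{t-s}(x-z) - p̂_{t-s}(y-z))² dz ds ≤ C |x - y|`. -/
theorem periodic_heat_kernel_spatial_regularity (T : ℝ) (hT : 0 < T) :
    ∃ C : ℝ, ∀ x ∈ Set.Icc (0 : ℝ) 1, ∀ y ∈ Set.Icc (0 : ℝ) 1, ∀ t ∈ Set.Ioc (0 : ℝ) T,
      (∫ s in (0 : ℝ)..t, ∫ z in (0 : ℝ)..1,
          (periodicHeatKernel (t - s) (x - z) - periodicHeatKernel (t - s) (y - z)) ^ 2)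
        ≤ C * |x - y| := by
  refine ⟨1 / 2, fun x hx y hy t ht ↦ ?_⟩
  have hh : |x - y| ≤ 1 := abs_sub_le_iff.2 ⟨by linarith [hx.2, hy.1], by linarith [hy.2, hx.1]⟩
  set m : ℤ → ℝ := fun n ↦ 2 - 2 * cos (2 * π * n * (x - y)) with hm
  have hm0 (n : ℤ) : 0 ≤ m n := by
    simp only [hm]
    linarith [cos_le_one (2 * π * n * (x - y))]
  set F : ℤ → ℝ → ℝ := fun n s ↦ rexp (-(8 * π ^ 2 * n ^ 2) * (t - s)) * m n with hF
  have hF0 (n : ℤ) (s : ℝ) : 0 ≤ F n s := mul_nonneg (exp_pos _).le (hm0 n)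
  have hB : HasSum (fun n : ℤ ↦ m n / (8 * π ^ 2 * n ^ 2)) _ := hasSum_two_sub_two_cos_div hh
  have hle (n : ℤ) : ∫ s in Set.Ioc 0 t, F n s ≤ m n / (8 * π ^ 2 * n ^ 2) := by
    rcases eq_or_ne n 0 with rfl | hn
    · simp [hF, hm]
    · have : (n : ℝ) ≠ 0 := by exact_mod_cast hn
      simp only [hF]
      rw [integral_mul_const, div_eq_mul_one_div, mul_comm (m n)]
      exact mul_le_mul_of_nonneg_right
        (integral_exp_neg_mul_sub_le (by positivity) ht.1.le) (hm0 n)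
  have hint (n : ℤ) : Integrable (F n) (volume.restrict (Set.Ioc 0 t)) :=
    (Continuous.integrableOn_Icc (by fun_prop)).mono_set Set.Ioc_subset_Icc_self
  have hsum : Summable fun n ↦ ∫ s in Set.Ioc 0 t, F n s :=
    .of_nonneg_of_le (fun n ↦ integral_nonneg (hF0 n)) hle hB.summable
  have hswap := integral_tsum_of_summable_integral_norm hint
    (by simpa only [Real.norm_eq_abs, abs_of_nonneg (hF0 _ _)] using hsum)
  have hmain : (∫ s in (0 : ℝ)..t, ∫ z in (0 : ℝ)..1,
      (periodicHeatKernel (t - s) (x - z) - periodicHeatKernel (t - s) (y - z)) ^ 2) =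
      ∑' n, ∫ s in Set.Ioc 0 t, F n s := by
    -- The expansion needs `t - s > 0`, so the endpoint `s = t` is discarded.
    rw [hswap, intervalIntegral.integral_of_le ht.1.le, integral_Ioc_eq_integral_Ioo,
      integral_Ioc_eq_integral_Ioo]
    refine setIntegral_congr_fun measurableSet_Ioo fun s hs ↦ ?_
    exact (hasSum_integral_sq_sub (sub_pos.2 hs.2) x y).tsum_eq.symm
  rw [hmain]
  refine (hsum.tsum_le_tsum hle hB.summable).trans ?_
  rw [hB.tsum_eq]
  nlinarith [sq_nonneg |x - y|]
end

section
/- (Lemma 4.1(ii): temporal regularity of the periodic heat kernel.) For every T > 0 there exists a constant C such that for all x ∈ [0,1] and all 0 ≤ s < t ≤ T: ∫₀ˢ ∫₀¹ ( p̂_{t−τ}(x−z) − p̂_{s−τ}(x−z) )² dz dτ + ∫ₛᵗ ∫₀¹ ( p̂_{t−τ}(x−z) )² dz dτ ≤ C (t − s)^{1/2}. -/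
/-!
By Poisson summation `p̂_t` has Fourier coefficients `q_n(t) = exp (-(2πn)² t)`, so Parseval's
identity turns the inner integrals into sums over `n`. Write `θ(u) = ∑ n, q_n(u) = p̂_u(0)`.
Then `∫ p̂_a² = θ(2a)`, and for `b ≤ a`
`∫ (p̂_a - p̂_b)² = ∑ n, (q_n(a) - q_n(b))² ≤ ∑ n, (q_n(b)² - q_n(a) q_n(b)) = θ(2b) - θ(a + b)`.

With `a = t - τ`, `b = s - τ`, `h = t - s` the bound on the first term is `θ(2b) - θ(2b + h)`, whose
integral over `τ` telescopes to at most `½ ∫₀ʰ θ`; the second term equals `½ ∫₀²ʰ θ`. Hence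
everything is at most `∫₀²ʰ θ`. Finally `√u θ(u)` is nondecreasing in `u`, as one sees from the
Gaussian series defining `p̂_u(0)`, so `θ(u) ≤ M u^(-1/2)` on bounded intervals, and integrating
this gives the factor `h^(1/2)`. The lemmas carrying the argument are `integral_fourier_sq`,
`integral_diff_sq_le` and `periodicHeatKernel_zero_le`.
-/

open MeasureTheory Real

/-! ### Fourier expansion of the periodic heat kernel -/

/-- The `n`-th Fourier coefficient `exp (-(2πn)² u)` of the periodic heat kernel at time `u`. -/
noncomputable def heatCoeff (n : ℤ) (u : ℝ) : ℝ := Real.exp (-(2 * π * n) ^ 2 * u)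

lemma heatCoeff_neg (n : ℤ) (u : ℝ) : heatCoeff (-n) u = heatCoeff n u := by
  simp [heatCoeff]

lemma heatCoeff_mul (n : ℤ) (a b : ℝ) :
    heatCoeff n a * heatCoeff n b = heatCoeff n (a + b) := by
  rw [heatCoeff, heatCoeff, heatCoeff, ← Real.exp_add]
  ring_nf

lemma heatCoeff_antitone (n : ℤ) : Antitone (heatCoeff n) := by
  intro a b hab
  apply Real.exp_le_exp.mpr
  nlinarith [mul_le_mul_of_nonneg_left hab (sq_nonneg (2 * π * (n : ℝ)))]

lemma gaussianHeatKernel_eq {u : ℝ} (x : ℝ) (k : ℤ) :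
    gaussianHeatKernel u (x - k) = (Real.sqrt (4 * π * u))⁻¹ *
      Real.exp (-π * ((k : ℝ) + (-x : ℝ)) ^ 2 * (1 / (4 * π * u))) := by
  have := Real.pi_pos
  rw [gaussianHeatKernel]
  congr 2
  field_simp
  ring

lemma hasSum_gaussianHeatKernel {u : ℝ} (hu : 0 < u) (x : ℝ) :
    HasSum (fun k : ℤ => gaussianHeatKernel u (x - k)) (periodicHeatKernel u x) := by
  have h1 : 0 < 1 / (4 * π * u) := by positivity
  have := (HurwitzZeta.hasSum_int_evenKernel (-x) h1).mul_left (Real.sqrt (4 * π * u))⁻¹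
  simp_rw [← gaussianHeatKernel_eq] at this
  exact this.summable.hasSum

/-- Poisson summation, in the form of the functional equation of the Jacobi theta function. -/
lemma periodicHeatKernel_eq_cosKernel {u : ℝ} (hu : 0 < u) (x : ℝ) :
    periodicHeatKernel u x = HurwitzZeta.cosKernel (x : UnitAddCircle) (4 * π * u) := by
  have h0 : 0 < 4 * π * u := by positivity
  have h1 : 0 < 1 / (4 * π * u) := by positivity
  have := (HurwitzZeta.hasSum_int_evenKernel (-x) h1).mul_left (Real.sqrt (4 * π * u))⁻¹
  simp_rw [← gaussianHeatKernel_eq] at this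
  rw [(hasSum_gaussianHeatKernel hu x).unique this,
    HurwitzZeta.evenKernel_functional_equation, AddCircle.coe_neg, HurwitzZeta.cosKernel_neg,
    ← Real.sqrt_eq_rpow, one_div_one_div, Real.sqrt_div zero_le_one, Real.sqrt_one,
    one_div_one_div, inv_mul_cancel_left₀ (Real.sqrt_pos.mpr h0).ne']

lemma hasSum_fourier_periodicHeatKernel {u : ℝ} (hu : 0 < u) (x : ℝ) :
    HasSum (fun n : ℤ => (heatCoeff n u : ℂ) * Complex.exp (2 * π * Complex.I * n * x))
      (periodicHeatKernel u x : ℂ) := by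
  have h0 : 0 < 4 * π * u := by positivity
  rw [periodicHeatKernel_eq_cosKernel hu]
  convert HurwitzZeta.hasSum_int_cosKernel x h0 using 2 with n
  rw [mul_comm, heatCoeff]
  congr 2
  · ring
  · congr 1
    ring

lemma hasSum_periodicHeatKernel_zero {u : ℝ} (hu : 0 < u) :
    HasSum (fun n : ℤ => heatCoeff n u) (periodicHeatKernel u 0) := by
  have := hasSum_fourier_periodicHeatKernel hu 0
  simp only [Complex.ofReal_zero, mul_zero, Complex.exp_zero, mul_one] at this
  exact_mod_cast this

/-! ### Parseval and the integrals over a period -/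

lemma integral_exp_int (k : ℤ) (x : ℝ) :
    ∫ z in (0 : ℝ)..1, Complex.exp (2 * π * Complex.I * k * ((x - z : ℝ) : ℂ)) =
      if k = 0 then 1 else 0 := by
  split_ifs with hk
  · simp [hk]
  · have hc : -(2 * π * Complex.I * k) ≠ 0 := by
      simp [hk, Real.pi_ne_zero]
    have h1 : Complex.exp (-(2 * π * Complex.I * k)) = 1 := by
      rw [Complex.exp_eq_one_iff]
      exact ⟨-k, by push_cast; ring⟩
    have : ∀ z : ℝ, Complex.exp (2 * π * Complex.I * k * ((x - z : ℝ) : ℂ)) =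
        Complex.exp (2 * π * Complex.I * k * x) * Complex.exp (-(2 * π * Complex.I * k) * z) := by
      intro z
      rw [← Complex.exp_add]
      push_cast
      ring_nf
    simp_rw [this]
    rw [intervalIntegral.integral_const_mul, integral_exp_mul_complex hc]
    simp [h1]

/-- Parseval's identity for an absolutely convergent Fourier series with real, even coefficients,
evaluated at `x - z` and integrated over a period in `z`. -/
lemma integral_fourier_sq {c : ℤ → ℝ} (hc : Summable c) (hev : ∀ n, c (-n) = c n)
    {f : ℝ → ℝ}
    (hf : ∀ y : ℝ, HasSum (fun n : ℤ => (c n : ℂ) * Complex.exp (2 * π * Complex.I * n * y))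
      (f y : ℂ)) (x : ℝ) :
    HasSum (fun n => c n ^ 2) (∫ z in (0 : ℝ)..1, f (x - z) ^ 2) := by
  have hnorm : ∀ (n : ℤ) (y : ℝ),
      ‖Complex.exp (2 * π * Complex.I * n * y)‖ = 1 := by
    intro n y
    rw [show 2 * π * Complex.I * n * (y : ℂ) = ((2 * π * n * y : ℝ) : ℂ) * Complex.I by
      push_cast; ring]
    exact Complex.norm_exp_ofReal_mul_I _
  have hca : Summable fun n => |c n| := hc.abs
  have hprod : Summable fun p : ℤ × ℤ => |c p.1| * |c p.2| :=
    hca.mul_of_nonneg hca (fun _ => abs_nonneg _) (fun _ => abs_nonneg _)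
  let F : ℤ × ℤ → ℝ → ℂ := fun p z =>
    ((c p.1 * c p.2 : ℝ) : ℂ) *
      Complex.exp (2 * π * Complex.I * ((p.1 + p.2 : ℤ) : ℂ) * ((x - z : ℝ) : ℂ))
  have hFnorm : ∀ p z, ‖F p z‖ = |c p.1| * |c p.2| := by
    intro p z
    simp only [F]
    rw [norm_mul, hnorm, mul_one, Complex.norm_real, Real.norm_eq_abs, abs_mul]
  have hsum : ∀ z, HasSum (fun p => F p z) ((f (x - z) ^ 2 : ℝ) : ℂ) := by
    intro z
    have hF : ∀ p : ℤ × ℤ, ((c p.1 : ℂ) * Complex.exp (2 * π * Complex.I * p.1 * (x - z : ℝ))) *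
        ((c p.2 : ℂ) * Complex.exp (2 * π * Complex.I * p.2 * (x - z : ℝ))) = F p z := by
      intro p
      simp only [F]
      rw [mul_mul_mul_comm, ← Complex.exp_add]
      push_cast
      ring_nf
    have h1 := (hf (x - z)).mul (hf (x - z)) (by
      simp_rw [hF]
      exact Summable.of_norm (by simpa only [hFnorm] using hprod))
    simp_rw [hF] at h1
    rwa [← sq, ← Complex.ofReal_pow] at h1
  have key := intervalIntegral.hasSum_integral_of_dominated_convergence
    (μ := volume) (a := 0) (b := 1) (F := F) (f := fun z => ((f (x - z) ^ 2 : ℝ) : ℂ))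
    (fun p _ => |c p.1| * |c p.2|)
    (fun p => (by fun_prop : Continuous (F p)).aestronglyMeasurable)
    (fun p => Filter.Eventually.of_forall fun z _ => (hFnorm p z).le)
    (Filter.Eventually.of_forall fun z _ => hprod)
    intervalIntegrable_const
    (Filter.Eventually.of_forall fun z _ => hsum z)
  have hint : ∀ p : ℤ × ℤ, ∫ z in (0 : ℝ)..1, F p z =
      if p.1 + p.2 = 0 then ((c p.1 * c p.2 : ℝ) : ℂ) else 0 := by
    intro p
    simp only [F]
    rw [intervalIntegral.integral_const_mul, integral_exp_int]
    split_ifs <;> simp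
  simp_rw [hint] at key
  rw [intervalIntegral.integral_ofReal] at key
  -- only the antidiagonal `(n, -n)` contributes to the double sum
  have hinj : Function.Injective (fun n : ℤ => ((n, -n) : ℤ × ℤ)) := fun a b h => by
    simpa using congrArg Prod.fst h
  rw [← hinj.hasSum_iff] at key
  · have h2 : HasSum (fun n : ℤ => ((c n ^ 2 : ℝ) : ℂ))
        ((∫ z in (0 : ℝ)..1, f (x - z) ^ 2 : ℝ) : ℂ) := by
      simpa [Function.comp_def, hev, ← sq] using key
    exact_mod_cast h2
  · rintro ⟨m, n⟩ hmn
    rw [if_neg]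
    intro h
    exact hmn ⟨m, Prod.ext rfl (neg_eq_of_add_eq_zero_right h)⟩

lemma integral_periodicHeatKernel_sq {a : ℝ} (ha : 0 < a) (x : ℝ) :
    ∫ z in (0 : ℝ)..1, periodicHeatKernel a (x - z) ^ 2 = periodicHeatKernel (2 * a) 0 := by
  have h := integral_fourier_sq (hasSum_periodicHeatKernel_zero ha).summable
    (fun n => heatCoeff_neg n a) (fun y => hasSum_fourier_periodicHeatKernel ha y) x
  refine h.unique ?_
  simp_rw [sq, heatCoeff_mul]
  rw [← two_mul]
  exact hasSum_periodicHeatKernel_zero (by positivity)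

/-- The square is expanded under Parseval as `q_n(a)² - 2 q_n(a) q_n(b) + q_n(b)²`, and
`q_n(a)² ≤ q_n(a) q_n(b)` since `b ≤ a`. -/
lemma integral_diff_sq_le {a b : ℝ} (hb : 0 < b) (hab : b ≤ a) (x : ℝ) :
    ∫ z in (0 : ℝ)..1, (periodicHeatKernel a (x - z) - periodicHeatKernel b (x - z)) ^ 2 ≤
      periodicHeatKernel (2 * b) 0 - periodicHeatKernel (a + b) 0 := by
  have ha : 0 < a := hb.trans_le hab
  have h := integral_fourier_sq (c := fun n => heatCoeff n a - heatCoeff n b)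
    (f := fun y => periodicHeatKernel a y - periodicHeatKernel b y)
    ((hasSum_periodicHeatKernel_zero ha).summable.sub
      (hasSum_periodicHeatKernel_zero hb).summable)
    (fun n => by simp only [heatCoeff_neg])
    (fun y => by
      have := (hasSum_fourier_periodicHeatKernel ha y).sub (hasSum_fourier_periodicHeatKernel hb y)
      simp_rw [← sub_mul] at this
      exact_mod_cast this) x
  refine hasSum_le (fun n => ?_) h ((hasSum_periodicHeatKernel_zero (by positivity)).sub
    (hasSum_periodicHeatKernel_zero (by positivity)))
  rw [two_mul, ← heatCoeff_mul, ← heatCoeff_mul]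
  have h1 : heatCoeff n a ≤ heatCoeff n b := heatCoeff_antitone n hab
  have h2 : 0 ≤ heatCoeff n a := (Real.exp_pos _).le
  nlinarith [mul_le_mul_of_nonneg_left h1 h2]

/-! ### The kernel on the diagonal -/

lemma periodicHeatKernel_nonneg (u x : ℝ) : 0 ≤ periodicHeatKernel u x :=
  tsum_nonneg fun _ => mul_nonneg (by positivity) (Real.exp_pos _).le

lemma periodicHeatKernel_zero_antitoneOn :
    AntitoneOn (fun u => periodicHeatKernel u 0) (Set.Ioi 0) := fun _ ha _ hb hab =>
  hasSum_le (fun n => heatCoeff_antitone n hab) (hasSum_periodicHeatKernel_zero hb)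
    (hasSum_periodicHeatKernel_zero ha)

/-- On-diagonal bound `p̂_u(0) ≤ M u^(-1/2)` for `u ≤ U`, with `M = √U p̂_U(0)`: each term of
`√u p̂_u(0) = (4π)^(-1/2) ∑ k, exp (-k² / (4u))` is nondecreasing in `u`. -/
lemma periodicHeatKernel_zero_le {u U : ℝ} (hu : 0 < u) (huU : u ≤ U) :
    periodicHeatKernel u 0 ≤ Real.sqrt U * periodicHeatKernel U 0 * u ^ (-(1 / 2) : ℝ) := by
  have hU : 0 < U := hu.trans_le huU
  have hsu := Real.sqrt_pos.mpr hu
  have hsU := Real.sqrt_pos.mpr hU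
  have h4 : 0 < Real.sqrt (4 * π) := Real.sqrt_pos.mpr (by positivity)
  have key : Real.sqrt u * periodicHeatKernel u 0 ≤ Real.sqrt U * periodicHeatKernel U 0 := by
    refine hasSum_le (fun k => ?_) ((hasSum_gaussianHeatKernel hu 0).mul_left _)
      ((hasSum_gaussianHeatKernel hU 0).mul_left _)
    have e : ∀ v : ℝ, 0 < v → Real.sqrt v * gaussianHeatKernel v (0 - k) =
        (Real.sqrt (4 * π))⁻¹ * Real.exp (-((0 - k : ℝ) ^ 2) / (4 * v)) := by
      intro v hv
      have hsv := Real.sqrt_pos.mpr hv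
      rw [gaussianHeatKernel, Real.sqrt_mul (by positivity)]
      field_simp
    rw [e u hu, e U hU]
    gcongr ?_ * Real.exp ?_
    rw [neg_div, neg_div, neg_le_neg_iff]
    gcongr
  rw [Real.rpow_neg hu.le, ← Real.sqrt_eq_rpow, ← div_eq_mul_inv, le_div_iff₀ hsu, mul_comm]
  exact key

lemma intervalIntegrable_periodicHeatKernel_zero {a b : ℝ} (ha : 0 ≤ a) (hab : a ≤ b) :
    IntervalIntegrable (fun u => periodicHeatKernel u 0) volume a b := by
  have hsub : Set.uIoc a b ⊆ Set.Ioi 0 := by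
    rw [Set.uIoc_of_le hab]
    exact fun u hu => ha.trans_lt hu.1
  have hg : IntervalIntegrable (fun u : ℝ => Real.sqrt b * periodicHeatKernel b 0 *
      u ^ (-(1 / 2) : ℝ)) volume a b :=
    (intervalIntegral.intervalIntegrable_rpow' (by norm_num)).const_mul _
  refine hg.mono_fun' ?_ ?_
  · exact (aemeasurable_restrict_of_antitoneOn measurableSet_uIoc
      (periodicHeatKernel_zero_antitoneOn.mono hsub)).aestronglyMeasurable
  · refine (ae_restrict_iff' measurableSet_uIoc).mpr (Filter.Eventually.of_forall fun u hu => ?_)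
    simp only
    rw [Real.norm_of_nonneg (periodicHeatKernel_nonneg _ _)]
    refine periodicHeatKernel_zero_le (hsub hu) ?_
    rw [Set.uIoc_of_le hab] at hu
    exact hu.2

lemma integral_periodicHeatKernel_zero_le {c U : ℝ} (hc : 0 ≤ c) (hcU : c ≤ U) :
    ∫ u in (0 : ℝ)..c, periodicHeatKernel u 0 ≤
      2 * (Real.sqrt U * periodicHeatKernel U 0) * c ^ (1 / 2 : ℝ) := by
  have h : ∫ u in (0 : ℝ)..c, periodicHeatKernel u 0 ≤
      ∫ u in (0 : ℝ)..c, Real.sqrt U * periodicHeatKernel U 0 * u ^ (-(1 / 2) : ℝ) := by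
    refine intervalIntegral.integral_mono_on_of_le_Ioo hc
      (intervalIntegrable_periodicHeatKernel_zero le_rfl hc)
      ((intervalIntegral.intervalIntegrable_rpow' (by norm_num)).const_mul _) ?_
    intro u hu
    exact periodicHeatKernel_zero_le hu.1 (hu.2.le.trans hcU)
  refine h.trans (le_of_eq ?_)
  rw [intervalIntegral.integral_const_mul, integral_rpow (Or.inl (by norm_num))]
  norm_num
  ring

/-! ### Integration in time -/

/-- Contribution of the times `τ ∈ [0, s]`. The pointwise bounds are applied on the open interval,
because the kernel has a junk value at time `0`, reached at `τ = s`. -/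
lemma first_term_le {s t : ℝ} (hs : 0 ≤ s) (hst : s < t) (x : ℝ) :
    (∫ τ in (0 : ℝ)..s, ∫ z in (0 : ℝ)..1,
      (periodicHeatKernel (t - τ) (x - z) - periodicHeatKernel (s - τ) (x - z)) ^ 2) ≤
      2⁻¹ * ∫ u in (0 : ℝ)..(t - s), periodicHeatKernel u 0 := by
  have hI : ∀ {a b : ℝ}, 0 ≤ a → 0 ≤ b →
      IntervalIntegrable (fun u => periodicHeatKernel u 0) volume a b := by
    intro a b ha hb
    rcases le_total a b with h | h
    · exact intervalIntegrable_periodicHeatKernel_zero ha h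
    · exact (intervalIntegrable_periodicHeatKernel_zero hb h).symm
  have hsub : ∀ d, 2 * s ≤ d → IntervalIntegrable
      (fun τ => periodicHeatKernel (d - 2 * τ) 0) volume 0 s := by
    intro d hd
    have h1 := ((hI (a := d) (b := d - 2 * s) (by linarith) (by linarith)).comp_sub_left d)
    have h2 := h1.comp_mul_left (c := 2)
    simpa using h2
  have hg : IntervalIntegrable (fun τ => periodicHeatKernel (2 * s - 2 * τ) 0 -
      periodicHeatKernel (s + t - 2 * τ) 0) volume 0 s :=
    (hsub _ le_rfl).sub (hsub _ (by linarith))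
  calc _ ≤ ∫ τ in (0 : ℝ)..s, (periodicHeatKernel (2 * s - 2 * τ) 0 -
      periodicHeatKernel (s + t - 2 * τ) 0) := by
        rw [intervalIntegral.integral_of_le hs, intervalIntegral.integral_of_le hs,
          integral_Ioc_eq_integral_Ioo, integral_Ioc_eq_integral_Ioo]
        refine integral_mono_of_nonneg (Filter.Eventually.of_forall fun τ => ?_) ?_ ?_
        · exact intervalIntegral.integral_nonneg zero_le_one fun z _ => sq_nonneg _
        · exact ((intervalIntegrable_iff_integrableOn_Ioo_of_le hs).mp hg)
        · refine (ae_restrict_iff' measurableSet_Ioo).mpr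
            (Filter.Eventually.of_forall fun τ hτ => ?_)
          have := integral_diff_sq_le (a := t - τ) (b := s - τ) (by linarith [hτ.2])
            (by linarith) x
          rwa [mul_sub, show t - τ + (s - τ) = s + t - 2 * τ by ring] at this
    _ = 2⁻¹ * (∫ u in (0 : ℝ)..(2 * s), periodicHeatKernel u 0) -
        2⁻¹ * ∫ u in (t - s)..(s + t), periodicHeatKernel u 0 := by
        rw [intervalIntegral.integral_sub (hsub _ le_rfl) (hsub _ (by linarith)),
          intervalIntegral.integral_comp_sub_mul (fun u => periodicHeatKernel u 0) two_ne_zero,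
          intervalIntegral.integral_comp_sub_mul (fun u => periodicHeatKernel u 0) two_ne_zero,
          smul_eq_mul, smul_eq_mul]
        congr 3 <;> ring_nf
    _ ≤ _ := by
        have e1 := intervalIntegral.integral_add_adjacent_intervals
          (hI (a := 0) (b := t - s) le_rfl (by linarith))
          (hI (a := t - s) (b := s + t) (by linarith) (by linarith))
        have e2 := intervalIntegral.integral_add_adjacent_intervals
          (hI (a := 0) (b := 2 * s) le_rfl (by linarith))
          (hI (a := 2 * s) (b := s + t) (by linarith) (by linarith))
        have e3 : 0 ≤ ∫ u in (2 * s)..(s + t), periodicHeatKernel u 0 :=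
          intervalIntegral.integral_nonneg (by linarith) fun u _ => periodicHeatKernel_nonneg u 0
        linarith

/-- Contribution of the times `τ ∈ [s, t]`. -/
lemma second_term_eq {s t : ℝ} (hst : s < t) (x : ℝ) :
    (∫ τ in s..t, ∫ z in (0 : ℝ)..1, (periodicHeatKernel (t - τ) (x - z)) ^ 2) =
      2⁻¹ * ∫ u in (0 : ℝ)..(2 * (t - s)), periodicHeatKernel u 0 := by
  have : (∫ τ in s..t, ∫ z in (0 : ℝ)..1, (periodicHeatKernel (t - τ) (x - z)) ^ 2) =
      ∫ τ in s..t, periodicHeatKernel (2 * t - 2 * τ) 0 := by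
    rw [intervalIntegral.integral_of_le hst.le, intervalIntegral.integral_of_le hst.le,
      integral_Ioc_eq_integral_Ioo, integral_Ioc_eq_integral_Ioo]
    refine setIntegral_congr_fun measurableSet_Ioo fun τ hτ => ?_
    rw [integral_periodicHeatKernel_sq (by linarith [hτ.2]), mul_sub]
  rw [this, intervalIntegral.integral_comp_sub_mul (fun u => periodicHeatKernel u 0) two_ne_zero,
    smul_eq_mul]
  congr 2 <;> ring

/-- **Lemma 4.1(ii)** of Hairer–Weber: temporal regularity of the periodic heat kernel.
For every `T > 0` there is `C` such that for all `x ∈ [0,1]` and `0 ≤ s < t ≤ T`: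
`∫₀ˢ ∫₀¹ (p̂_{t-τ}(x-z) - p̂_{s-τ}(x-z))² dz dτ + ∫ₛᵗ ∫₀¹ (p̂_{t-τ}(x-z))² dz dτ
  ≤ C (t-s)^{1/2}`. -/
theorem periodic_heat_kernel_temporal_regularity (T : ℝ) (hT : 0 < T) :
    ∃ C : ℝ, ∀ x ∈ Set.Icc (0 : ℝ) 1, ∀ s t : ℝ, 0 ≤ s → s < t → t ≤ T →
      (∫ τ in (0 : ℝ)..s, ∫ z in (0 : ℝ)..1,
          (periodicHeatKernel (t - τ) (x - z) - periodicHeatKernel (s - τ) (x - z)) ^ 2)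
        + (∫ τ in s..t, ∫ z in (0 : ℝ)..1, (periodicHeatKernel (t - τ) (x - z)) ^ 2)
        ≤ C * (t - s) ^ ((1 : ℝ) / 2) := by
  refine ⟨2 * (Real.sqrt (2 * T) * periodicHeatKernel (2 * T) 0) * 2 ^ (1 / 2 : ℝ), ?_⟩
  intro x _ s t hs hst htT
  have h1 := first_term_le hs hst x
  have h2 := second_term_eq hst x
  have h3 := integral_periodicHeatKernel_zero_le (c := 2 * (t - s)) (U := 2 * T)
    (by linarith) (by linarith)
  have h4 := intervalIntegral.integral_add_adjacent_intervals
    (intervalIntegrable_periodicHeatKernel_zero le_rfl (b := t - s) (by linarith))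
    (intervalIntegrable_periodicHeatKernel_zero (a := t - s) (b := 2 * (t - s))
      (by linarith) (by linarith))
  have h5 : 0 ≤ ∫ u in (t - s)..(2 * (t - s)), periodicHeatKernel u 0 :=
    intervalIntegral.integral_nonneg (by linarith) fun u _ => periodicHeatKernel_nonneg u 0
  rw [Real.mul_rpow (by norm_num) (by linarith), ← mul_assoc] at h3
  linarith
end

section
/- (Lemma 4.2(i): regularisation of the periodic heat kernel by a time-dependent weight.) Let α ∈ (0, 1/2). For every T > 0 there exists a constant C such that for all x, y ∈ [0,1] and all t ∈ (0,T]: ∫₀ᵗ ∫₀¹ ( p̂_{t−s}(y−z) − p̂_{t−s}(x−z) )² (t−s)^{α} dz ds ≤ C |x − y|^{1+2α}. -/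
/-!
With `r = t - s` and `d = |x - y|`, Poisson summation (`periodicHeatKernel_eq`) writes the periodic
heat kernel as `p̂_r(x) = Σ_k exp(-4π²k²r) exp(2πikx)`. Parseval's identity
(`integral_sq_periodicHeatKernel_sub`) then gives
`∫₀¹ (p̂_r(y-z) - p̂_r(x-z))² dz = Σ_k exp(-8π²k²r) |exp(2πiky) - exp(2πikx)|²`.

The last factor is at most `min(4, (2πkd)²)`, and `Σ_k exp(-4π²k²r) ≤ K r^{-1/2}` for `r ≤ T`
(`tsum_exp_le`). Hence the spatial integral is at most `4 K r^{-1/2}` (`integral_sq_le_four`), and also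
at most `K d² r^{-3/2}` (`integral_sq_le_div`). After multiplication by `r^α`, the first bound is
integrated over `0 < r ≤ d²` and the second over `r > d²` (`setIntegral_le_of_two_bounds`). The second
integral converges because `α < 1/2`, and both are constant multiples of `d^{1+2α}`.
-/

open MeasureTheory Real

/-! ### Parseval's identity and Poisson summation -/

open Complex in
/-- Parseval's identity for an absolutely convergent Fourier series on `[0, 1]`. -/
lemma parseval_aux (a : ℤ → ℂ) (ha : Summable fun k => ‖a k‖) :
    ∫ z in (0 : ℝ)..1, ‖∑' k : ℤ, a k * cexp (2 * π * I * k * z)‖ ^ 2 = ∑' k : ℤ, ‖a k‖ ^ 2 := by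
  have hs : Summable fun k : ℤ => a k • (fourier k : C(UnitAddCircle, ℂ)) :=
    Summable.of_norm (by simpa [norm_smul, fourier_norm] using ha)
  obtain ⟨F, hF⟩ := hs
  have hpt : ∀ z : ℝ, F (z : UnitAddCircle) = ∑' k : ℤ, a k * cexp (2 * π * I * k * z) := by
    intro z
    have := (ContinuousMap.evalCLM ℂ (z : UnitAddCircle)).hasSum hF
    refine this.tsum_eq.symm.trans (tsum_congr fun k => ?_)
    simp
  have hL := (ContinuousMap.toLp (E := ℂ) 2 AddCircle.haarAddCircle ℂ).hasSum hF
  -- Pair the `L²`-convergent series with each element of the orthonormal Fourier basis.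
  have hc : ∀ i, fourierCoeff F i = a i := by
    intro i
    rw [← fourierCoeff_toLp, ← fourierBasis_repr, HilbertBasis.repr_apply_apply, coe_fourierBasis]
    have h1 := (innerSL ℂ (fourierLp (T := (1 : ℝ)) 2 i)).hasSum hL
    refine h1.unique ?_
    have h2 := hasSum_ite_eq i (a i)
    refine (congrArg (fun f : ℤ → ℂ => HasSum f (a i)) (funext fun k => ?_)).mpr h2
    have := orthonormal_iff_ite.mp (orthonormal_fourier (T := (1 : ℝ))) i k
    simp only [map_smul, innerSL_apply_apply, smul_eq_mul]
    rw [show (ContinuousMap.toLp (E := ℂ) 2 AddCircle.haarAddCircle ℂ) (fourier k)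
      = fourierLp (T := (1 : ℝ)) 2 k from rfl, this]
    by_cases h : i = k
    · subst h; simp
    · simp [h, Ne.symm h]
  have hP := tsum_sq_fourierCoeff (ContinuousMap.toLp (E := ℂ) 2 AddCircle.haarAddCircle ℂ F)
  simp_rw [fourierCoeff_toLp, hc] at hP
  rw [hP]
  have h3 : ∫ t : UnitAddCircle, ‖(ContinuousMap.toLp (E := ℂ) 2 AddCircle.haarAddCircle ℂ F) t‖ ^ 2
      ∂AddCircle.haarAddCircle = ∫ t : UnitAddCircle, ‖F t‖ ^ 2 := by
    rw [AddCircle.integral_haarAddCircle]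
    simp only [inv_one, one_smul]
    have := ContinuousMap.coeFn_toLp (p := 2) (𝕜 := ℂ)
      (AddCircle.haarAddCircle (T := (1 : ℝ))) F
    have hv : (volume : Measure UnitAddCircle) = AddCircle.haarAddCircle := by
      rw [AddCircle.volume_eq_smul_haarAddCircle]; simp
    rw [hv]
    exact integral_congr_ae (by filter_upwards [this] with t ht; rw [ht])
  rw [h3, ← UnitAddCircle.intervalIntegral_preimage 0]
  simp [hpt]

/-- Summability of Gaussians over `ℤ`, read off from that of the Jacobi theta series at
`τ = i c / π`. -/
lemma summable_exp_neg_mul_int_sq {c : ℝ} (hc : 0 < c) :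
    Summable fun k : ℤ => Real.exp (-c * (k : ℝ) ^ 2) := by
  have h := (summable_jacobiTheta₂_term_iff 0 (Complex.I * (c / π : ℝ))).mpr (by simp; positivity)
  refine h.norm.congr fun k => ?_
  rw [norm_jacobiTheta₂_term]
  congr 1
  simp
  field_simp

open Complex in
/-- The Fourier series of the periodic heat kernel, by Poisson summation. The sign in the exponential
makes the translate `z ↦ p̂_t(x - z)` a series in `exp(2πikz)`. -/
lemma periodicHeatKernel_eq {t : ℝ} (ht : 0 < t) (x : ℝ) :
    (periodicHeatKernel t x : ℂ) =
      ∑' k : ℤ, (Real.exp (-(4 * π ^ 2 * t) * (k : ℝ) ^ 2) : ℂ) * cexp (-(2 * π * I * k * x)) := by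
  have h := Complex.tsum_exp_neg_quadratic (a := ((4 * π * t : ℝ) : ℂ))
    (by rw [ofReal_re]; positivity) (-I * x)
  have h1 : ∀ k : ℤ, cexp (-π * ((4 * π * t : ℝ) : ℂ) * k ^ 2 + 2 * π * (-I * x) * k)
      = (Real.exp (-(4 * π ^ 2 * t) * (k : ℝ) ^ 2) : ℂ) * cexp (-(2 * π * I * k * x)) := by
    intro k
    rw [ofReal_exp, ← Complex.exp_add]
    congr 1
    push_cast
    ring
  simp_rw [h1] at h
  rw [h, periodicHeatKernel, ← (Equiv.neg ℤ).tsum_eq, ofReal_tsum, ← tsum_mul_left]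
  congr 1
  ext k
  rw [gaussianHeatKernel, ofReal_mul, ofReal_exp, Real.sqrt_eq_rpow, ofReal_inv,
    ofReal_cpow (by positivity), one_div]
  congr 2
  · norm_num
  · have : (t : ℂ) ≠ 0 := by exact_mod_cast ht.ne'
    have : (π : ℂ) ≠ 0 := by exact_mod_cast Real.pi_ne_zero
    have e : (k : ℂ) + I * (-I * x) = k + x := by linear_combination -(x : ℂ) * I_mul_I
    rw [e]
    simp
    field_simp
    ring

/-- The on-diagonal bound `p̂_r(0) ≤ K_T r^{-1/2}` for `0 < r ≤ T`: Poisson summation turns the sum into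
`(4πr)^{-1/2} Σ exp(-k²/(4r))`, which is monotone in `r` apart from the prefactor. -/
lemma tsum_exp_le {T r : ℝ} (hr : 0 < r) (hrT : r ≤ T) :
    ∑' k : ℤ, Real.exp (-(4 * π ^ 2 * r) * (k : ℝ) ^ 2) ≤
      r ^ (-(1 / 2) : ℝ) * ∑' k : ℤ, Real.exp (-(1 / (4 * T)) * (k : ℝ) ^ 2) := by
  have hT : 0 < T := hr.trans_le hrT
  have h := Real.tsum_exp_neg_mul_int_sq (a := 4 * π * r) (by positivity)
  have e1 : ∀ k : ℤ, -π * (4 * π * r) * (k : ℝ) ^ 2 = -(4 * π ^ 2 * r) * (k : ℝ) ^ 2 :=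
    fun k => by ring
  have e2 : ∀ k : ℤ, -π / (4 * π * r) * (k : ℝ) ^ 2 = -(1 / (4 * r)) * (k : ℝ) ^ 2 :=
    fun k => by field_simp
  simp_rw [e1, e2] at h
  rw [h, Real.rpow_neg hr.le, one_div]
  gcongr ?_⁻¹ * ?_
  · apply Real.rpow_le_rpow hr.le _ (by norm_num)
    nlinarith [Real.pi_gt_three]
  · refine (summable_exp_neg_mul_int_sq (by positivity)).tsum_le_tsum (fun k => ?_)
      (summable_exp_neg_mul_int_sq (by positivity))
    gcongr

/-! ### The spatial integral -/

open Complex in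
lemma norm_exp_sub_exp_le (k : ℤ) (x y : ℝ) :
    ‖cexp (-(2 * π * I * k * y)) - cexp (-(2 * π * I * k * x))‖ ≤ 2 * π * |(k : ℝ)| * |x - y| := by
  have e : cexp (-(2 * π * I * k * y)) - cexp (-(2 * π * I * k * x))
      = cexp (I * ((-(2 * π * k * x) : ℝ) : ℂ))
        * (cexp (I * ((2 * π * k * (x - y) : ℝ) : ℂ)) - 1) := by
    rw [mul_sub, ← Complex.exp_add, mul_one]
    congr 2 <;> push_cast <;> ring
  rw [e, norm_mul, mul_comm I, Complex.norm_exp_ofReal_mul_I, one_mul]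
  refine Real.norm_exp_I_mul_ofReal_sub_one_le.trans (le_of_eq ?_)
  rw [Real.norm_eq_abs, abs_mul, abs_mul, abs_of_pos (by positivity : (0 : ℝ) < 2 * π)]

open Complex in
lemma norm_exp_sub_exp_le_two (k : ℤ) (x y : ℝ) :
    ‖cexp (-(2 * π * I * k * y)) - cexp (-(2 * π * I * k * x))‖ ≤ 2 := by
  have h : ∀ w : ℝ, ‖cexp (-(2 * π * I * k * w))‖ = 1 := by
    intro w
    rw [show -(2 * π * I * k * w) = ((-(2 * π * k * w) : ℝ) : ℂ) * I by push_cast; ring,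
      Complex.norm_exp_ofReal_mul_I]
  refine (norm_sub_le _ _).trans ?_
  rw [h, h]
  norm_num

open Complex in
/-- Parseval's identity for the difference of two translates of the periodic heat kernel. -/
lemma integral_sq_periodicHeatKernel_sub {r : ℝ} (hr : 0 < r) (x y : ℝ) :
    ∫ z in (0 : ℝ)..1, (periodicHeatKernel r (y - z) - periodicHeatKernel r (x - z)) ^ 2 =
      ∑' k : ℤ, (Real.exp (-(4 * π ^ 2 * r) * (k : ℝ) ^ 2) *
        ‖cexp (-(2 * π * I * k * y)) - cexp (-(2 * π * I * k * x))‖) ^ 2 := by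
  set c : ℤ → ℝ := fun k => Real.exp (-(4 * π ^ 2 * r) * (k : ℝ) ^ 2) with hc
  have hcs : Summable c := summable_exp_neg_mul_int_sq (by positivity)
  set a : ℤ → ℂ := fun k =>
    (c k : ℂ) * (cexp (-(2 * π * I * k * y)) - cexp (-(2 * π * I * k * x))) with ha
  have hna : ∀ k, ‖a k‖ =
      c k * ‖cexp (-(2 * π * I * k * y)) - cexp (-(2 * π * I * k * x))‖ := by
    intro k
    rw [ha, norm_mul, Complex.norm_of_nonneg (Real.exp_pos _).le]
  have hsum : Summable fun k => ‖a k‖ := by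
    refine Summable.of_nonneg_of_le (fun k => norm_nonneg _) (fun k => ?_) (hcs.mul_right 2)
    rw [hna]
    exact mul_le_mul_of_nonneg_left (norm_exp_sub_exp_le_two k x y) (Real.exp_pos _).le
  have hs : ∀ w : ℝ, Summable fun k : ℤ => (c k : ℂ) * cexp (-(2 * π * I * k * w)) := by
    intro w
    refine Summable.of_norm (hcs.congr fun k => ?_)
    rw [norm_mul, Complex.norm_of_nonneg (Real.exp_pos _).le,
      show -(2 * π * I * k * w) = ((-(2 * π * k * w) : ℝ) : ℂ) * I by push_cast; ring,
      Complex.norm_exp_ofReal_mul_I, mul_one]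
  rw [tsum_congr fun k => congrArg (· ^ 2) (hna k).symm]
  rw [← parseval_aux a hsum]
  congr 1
  ext z
  have e : ((periodicHeatKernel r (y - z) - periodicHeatKernel r (x - z) : ℝ) : ℂ) =
      ∑' k : ℤ, a k * cexp (2 * π * I * k * z) := by
    rw [ofReal_sub, periodicHeatKernel_eq hr, periodicHeatKernel_eq hr,
      ← (hs (y - z)).tsum_sub (hs (x - z))]
    refine tsum_congr fun k => ?_
    have e2 : ∀ w : ℝ, cexp (-(2 * π * I * k * ((w - z : ℝ) : ℂ))) =
        cexp (-(2 * π * I * k * w)) * cexp (2 * π * I * k * z) := by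
      intro w
      rw [← Complex.exp_add]
      congr 1
      push_cast
      ring
    rw [e2, e2, ha]
    ring
  rw [← e, Complex.norm_real, Real.norm_eq_abs, sq_abs]

/-- A bound on each Parseval term by `B` times `exp(-4π²rk²)` bounds the `L²` distance of the
translates by `K_T r^{-1/2} B`. Only one of the two factors `exp(-4π²rk²)` in the squared coefficient
is kept for the summation; the other remains available to absorb powers of `k`. -/
lemma integral_sq_le {T r : ℝ} (hr : 0 < r) (hrT : r ≤ T) (x y : ℝ) {B : ℝ}
    (hB : ∀ k : ℤ, (Real.exp (-(4 * π ^ 2 * r) * (k : ℝ) ^ 2) *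
        ‖Complex.exp (-(2 * π * Complex.I * k * y)) - Complex.exp (-(2 * π * Complex.I * k * x))‖) ^ 2
      ≤ Real.exp (-(4 * π ^ 2 * r) * (k : ℝ) ^ 2) * B) :
    ∫ z in (0 : ℝ)..1, (periodicHeatKernel r (y - z) - periodicHeatKernel r (x - z)) ^ 2 ≤
      r ^ (-(1 / 2) : ℝ) * (∑' k : ℤ, Real.exp (-(1 / (4 * T)) * (k : ℝ) ^ 2)) * B := by
  have hs := (summable_exp_neg_mul_int_sq (c := 4 * π ^ 2 * r) (by positivity))
  have hB0 : 0 ≤ B := by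
    have := (sq_nonneg _).trans (hB 0)
    exact nonneg_of_mul_nonneg_right this (Real.exp_pos _)
  rw [integral_sq_periodicHeatKernel_sub hr]
  calc _ ≤ ∑' k : ℤ, Real.exp (-(4 * π ^ 2 * r) * (k : ℝ) ^ 2) * B :=
        (Summable.of_nonneg_of_le (fun k => sq_nonneg _) hB (hs.mul_right B)).tsum_le_tsum hB
          (hs.mul_right B)
    _ = (∑' k : ℤ, Real.exp (-(4 * π ^ 2 * r) * (k : ℝ) ^ 2)) * B := tsum_mul_right
    _ ≤ _ := mul_le_mul_of_nonneg_right (tsum_exp_le hr hrT) hB0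

/-- The bound that is effective for `r ≤ |x - y|²`. -/
lemma integral_sq_le_four {T r : ℝ} (hr : 0 < r) (hrT : r ≤ T) (x y : ℝ) :
    ∫ z in (0 : ℝ)..1, (periodicHeatKernel r (y - z) - periodicHeatKernel r (x - z)) ^ 2 ≤
      r ^ (-(1 / 2) : ℝ) * (∑' k : ℤ, Real.exp (-(1 / (4 * T)) * (k : ℝ) ^ 2)) * 4 := by
  refine integral_sq_le hr hrT x y fun k => ?_
  have h2 := norm_exp_sub_exp_le_two k x y
  set n := ‖Complex.exp (-(2 * π * Complex.I * k * y))
    - Complex.exp (-(2 * π * Complex.I * k * x))‖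
  have hn : 0 ≤ n := norm_nonneg _
  have h1 : Real.exp (-(4 * π ^ 2 * r) * (k : ℝ) ^ 2) ≤ 1 := by
    rw [Real.exp_le_one_iff, neg_mul, neg_nonpos]
    positivity
  have h0 := Real.exp_pos (-(4 * π ^ 2 * r) * (k : ℝ) ^ 2)
  rw [mul_pow]
  exact mul_le_mul (by nlinarith) (by nlinarith) (sq_nonneg _) h0.le

/-- The bound that is effective for `r ≥ |x - y|²`: the factor `k²` coming from the Lipschitz bound on
`exp(2πikx)` is absorbed through `u exp(-u) ≤ 1` with `u = 4π²rk²`, at the cost of `1 / r`. -/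
lemma integral_sq_le_div {T r : ℝ} (hr : 0 < r) (hrT : r ≤ T) (x y : ℝ) :
    ∫ z in (0 : ℝ)..1, (periodicHeatKernel r (y - z) - periodicHeatKernel r (x - z)) ^ 2 ≤
      r ^ (-(1 / 2) : ℝ) * (∑' k : ℤ, Real.exp (-(1 / (4 * T)) * (k : ℝ) ^ 2))
        * (|x - y| ^ 2 / r) := by
  refine integral_sq_le hr hrT x y fun k => ?_
  have h2 := norm_exp_sub_exp_le k x y
  set n := ‖Complex.exp (-(2 * π * Complex.I * k * y))
    - Complex.exp (-(2 * π * Complex.I * k * x))‖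
  have hn : 0 ≤ n := norm_nonneg _
  set u := 4 * π ^ 2 * r * (k : ℝ) ^ 2 with hu
  rw [show -(4 * π ^ 2 * r) * (k : ℝ) ^ 2 = -u by rw [hu]; ring]
  have hn2 : n ^ 2 ≤ u * (|x - y| ^ 2 / r) := by
    refine (pow_le_pow_left₀ hn h2 2).trans (le_of_eq ?_)
    rw [hu, mul_pow, mul_pow, mul_pow, sq_abs (k : ℝ)]
    field_simp
    rw [sq_abs]
    ring
  have hue : Real.exp (-u) * u ≤ 1 := by
    have := Real.add_one_le_exp u
    rw [Real.exp_neg, inv_mul_le_one₀ (Real.exp_pos _)]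
    linarith
  calc (Real.exp (-u) * n) ^ 2 = Real.exp (-u) * (Real.exp (-u) * n ^ 2) := by ring
    _ ≤ Real.exp (-u) * (Real.exp (-u) * (u * (|x - y| ^ 2 / r))) := by gcongr
    _ = Real.exp (-u) * ((Real.exp (-u) * u) * (|x - y| ^ 2 / r)) := by ring
    _ ≤ Real.exp (-u) * (1 * (|x - y| ^ 2 / r)) := by gcongr
    _ = _ := by ring

/-! ### The time integral -/

/-- Integration of the two competing power bounds, with the crossover at the parabolic scale
`r = d²`. Integrability of `g` is not needed: a non-integrable `g` has integral zero. -/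
lemma setIntegral_le_of_two_bounds {α : ℝ} (hα : 0 < α) (hα' : α < 1 / 2) {K d t : ℝ} (hK : 0 ≤ K)
    (hd : 0 < d) {g : ℝ → ℝ} (hg : ∀ r ∈ Set.Ioc 0 t, 0 ≤ g r)
    (h1 : ∀ r ∈ Set.Ioc 0 t, g r ≤ 4 * K * r ^ (α - 1 / 2))
    (h2 : ∀ r ∈ Set.Ioc 0 t, g r ≤ K * d ^ 2 * r ^ (α - 3 / 2)) :
    ∫ r in Set.Ioc 0 t, g r ≤
      (4 * K / (α + 1 / 2) + K / (1 / 2 - α)) * d ^ (1 + 2 * α) := by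
  have hD : 0 < d ^ 2 := by positivity
  set f₁ : ℝ → ℝ := fun r => 4 * K * r ^ (α - 1 / 2)
  set f₂ : ℝ → ℝ := fun r => K * d ^ 2 * r ^ (α - 3 / 2)
  set h : ℝ → ℝ := fun r =>
    (Set.Ioc 0 (d ^ 2)).indicator f₁ r + (Set.Ioi (d ^ 2)).indicator f₂ r
  have i1 : Integrable ((Set.Ioc 0 (d ^ 2)).indicator f₁) := by
    rw [integrable_indicator_iff measurableSet_Ioc,
      ← intervalIntegrable_iff_integrableOn_Ioc_of_le hD.le]
    exact (intervalIntegral.intervalIntegrable_rpow' (by linarith)).const_mul _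
  have i2 : Integrable ((Set.Ioi (d ^ 2)).indicator f₂) := by
    rw [integrable_indicator_iff measurableSet_Ioi]
    exact (integrableOn_Ioi_rpow_of_lt (by linarith) hD).const_mul _
  have hh0 : ∀ r, 0 ≤ h r := by
    intro r
    refine add_nonneg (Set.indicator_nonneg (fun s hs => ?_) _)
      (Set.indicator_nonneg (fun s hs => ?_) _)
    · have := hs.1
      positivity
    · have := hD.trans hs
      positivity
  have hgh : ∀ r ∈ Set.Ioc 0 t, g r ≤ h r := by
    intro r hr
    rcases le_or_gt r (d ^ 2) with hrd | hrd
    · have : h r = f₁ r := by simp [h, hr.1, hrd, not_lt.mpr hrd]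
      rw [this]
      exact h1 r hr
    · have : h r = f₂ r := by simp [h, hrd, not_le.mpr hrd]
      rw [this]
      exact h2 r hr
  have hpow : (d ^ 2) ^ (α + 1 / 2) = d ^ (1 + 2 * α) := by
    rw [← Real.rpow_natCast, ← Real.rpow_mul hd.le]
    congr 1
    push_cast
    ring
  have hpow' : d ^ 2 * (d ^ 2) ^ (α - 1 / 2) = d ^ (1 + 2 * α) := by
    rw [← hpow, ← Real.rpow_one_add' hD.le (by linarith)]
    congr 1
    ring
  calc ∫ r in Set.Ioc 0 t, g r ≤ ∫ r in Set.Ioc 0 t, h r := by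
        refine integral_mono_of_nonneg ?_ (i1.add i2).integrableOn ?_
        · exact (ae_restrict_iff' measurableSet_Ioc).mpr (.of_forall hg)
        · exact (ae_restrict_iff' measurableSet_Ioc).mpr (.of_forall hgh)
    _ ≤ ∫ r, h r := setIntegral_le_integral (i1.add i2) (.of_forall hh0)
    _ = (∫ r in (0 : ℝ)..(d ^ 2), f₁ r) + ∫ r in Set.Ioi (d ^ 2), f₂ r := by
        rw [integral_add i1 i2, integral_indicator measurableSet_Ioc,
          integral_indicator measurableSet_Ioi, intervalIntegral.integral_of_le hD.le]
    _ = _ := by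
        simp only [f₁, f₂]
        rw [intervalIntegral.integral_const_mul, integral_const_mul,
          integral_rpow (Or.inl (by linarith)), integral_Ioi_rpow_of_lt (by linarith) hD,
          show α - 1 / 2 + 1 = α + 1 / 2 by ring, show α - 3 / 2 + 1 = α - 1 / 2 by ring,
          Real.zero_rpow (by linarith), sub_zero, hpow, ← neg_sub (1 / 2 : ℝ) α, neg_div_neg_eq,
          neg_sub, add_mul, ← hpow']
        ring

/-- **Lemma 4.2(i)** of Hairer–Weber: regularisation of the periodic heat kernel by a
time-dependent weight.  Let `α ∈ (0, 1/2)`.  For every `T > 0` there is `C` such that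
for all `x, y ∈ [0,1]` and `t ∈ (0,T]`:
`∫₀ᵗ ∫₀¹ (p̂_{t-s}(y-z) - p̂_{t-s}(x-z))² (t-s)^α dz ds ≤ C |x - y|^{1+2α}`. -/
theorem periodic_heat_kernel_time_weight_bound (α : ℝ) (hα : 0 < α) (hα' : α < 1 / 2)
    (T : ℝ) (hT : 0 < T) :
    ∃ C : ℝ, ∀ x ∈ Set.Icc (0 : ℝ) 1, ∀ y ∈ Set.Icc (0 : ℝ) 1, ∀ t ∈ Set.Ioc (0 : ℝ) T,
      (∫ s in (0 : ℝ)..t, ∫ z in (0 : ℝ)..1,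
          (periodicHeatKernel (t - s) (y - z) - periodicHeatKernel (t - s) (x - z)) ^ 2
            * (t - s) ^ α)
        ≤ C * |x - y| ^ (1 + 2 * α) := by
  set K := ∑' k : ℤ, Real.exp (-(1 / (4 * T)) * (k : ℝ) ^ 2) with hKdef
  have hK : 0 ≤ K := tsum_nonneg fun k => (Real.exp_pos _).le
  refine ⟨4 * K / (α + 1 / 2) + K / (1 / 2 - α), fun x _ y _ t ht => ?_⟩
  -- The crossover scale `|x - y|²` degenerates on the diagonal, where both sides vanish.
  rcases eq_or_ne x y with rfl | hxy
  · simp [Real.zero_rpow (by linarith : 1 + 2 * α ≠ 0)]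
  set g : ℝ → ℝ := fun r =>
    (∫ z in (0 : ℝ)..1, (periodicHeatKernel r (y - z) - periodicHeatKernel r (x - z)) ^ 2) * r ^ α
    with hg
  have e : (∫ s in (0 : ℝ)..t, ∫ z in (0 : ℝ)..1,
      (periodicHeatKernel (t - s) (y - z) - periodicHeatKernel (t - s) (x - z)) ^ 2
        * (t - s) ^ α) = ∫ r in Set.Ioc 0 t, g r := by
    simp_rw [intervalIntegral.integral_mul_const]
    rw [intervalIntegral.integral_comp_sub_left g t, sub_self, sub_zero,
      intervalIntegral.integral_of_le ht.1.le]
  rw [e]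
  refine setIntegral_le_of_two_bounds hα hα' hK (abs_pos.mpr (sub_ne_zero.mpr hxy))
    (fun r hr => ?_) (fun r hr => ?_) (fun r hr => ?_)
  · exact mul_nonneg (intervalIntegral.integral_nonneg zero_le_one fun z _ => sq_nonneg _)
      (Real.rpow_nonneg hr.1.le _)
  · refine (mul_le_mul_of_nonneg_right (integral_sq_le_four hr.1 (hr.2.trans ht.2) x y)
      (Real.rpow_nonneg hr.1.le α)).trans (le_of_eq ?_)
    rw [← hKdef, sub_eq_neg_add α, Real.rpow_add hr.1]
    ring
  · refine (mul_le_mul_of_nonneg_right (integral_sq_le_div hr.1 (hr.2.trans ht.2) x y)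
      (Real.rpow_nonneg hr.1.le α)).trans (le_of_eq ?_)
    rw [← hKdef, show α - 3 / 2 = -(1 / 2) + α - 1 by ring, Real.rpow_sub_one hr.1.ne',
      Real.rpow_add hr.1]
    ring
end

section
/- (Bound on the term I_{2,1} in the proof of Lemma 4.2(ii).) Let α ∈ (0, 1/2). There exists a constant C such that for all t > 0 and all y ∈ ℝ: ∫_{max(t−y², 0)}^{t} ∫_ℝ ( p_{t−s}(z−y)² + p_{t−s}(z)² ) |z|^{2α} dz ds ≤ C |y|^{1+2α}. -/
/-!
Write `r = t - s`, so that `0 < r ≤ y²` on the domain of integration, and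
`p_r(x)² = (4πr)⁻¹ exp(-x²/(2r))`. Since `u ^ α ≤ 1 + u ≤ exp u` for `u ≥ 0`, half of the Gaussian
exponent absorbs the weight (`abs_rpow_mul_exp_le`):
`|x|^{2α} exp(-x²/(2r)) ≤ (4r)^α exp(-x²/(4r)) ≤ 2 |y|^{2α} exp(-x²/(4r))`.
As `2α ≤ 1`, also `|z|^{2α} ≤ |z - y|^{2α} + |y|^{2α}`, which handles the kernel centred at `y`.
Hence the integral over `z` is at most `5 |y|^{2α} (4πr)^{-1/2} ≤ (5/2) |y|^{2α} r^{-1/2}`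
(`inner_integral_le`), and integrating over `r ∈ (0, min (y², t))` gives the bound with `C = 5`.
-/

open MeasureTheory Real

lemma gaussianHeatKernel_sq {r : ℝ} (hr : 0 < r) (x : ℝ) :
    gaussianHeatKernel r x ^ 2 = (4 * π * r)⁻¹ * exp (-(x ^ 2) / (2 * r)) := by
  unfold gaussianHeatKernel
  rw [mul_pow, inv_pow, Real.sq_sqrt (by positivity), ← Real.exp_nat_mul]
  congr 2
  push_cast
  field_simp
  ring

/-- Half of the Gaussian exponent absorbs the polynomial weight; the variance is at most of order
`y²`, which turns the resulting factor `(4r)^α` into `2 |y|^{2α}`. -/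
lemma abs_rpow_mul_exp_le {α r y : ℝ} (hα : 0 < α) (hα' : α < 1 / 2) (hr : 0 < r)
    (hry : r ≤ y ^ 2) (x : ℝ) :
    |x| ^ (2 * α) * exp (-(x ^ 2) / (2 * r)) ≤
      2 * |y| ^ (2 * α) * exp (-(1 / (4 * r)) * x ^ 2) := by
  have hsq (w : ℝ) : |w| ^ (2 * α) = (w ^ 2) ^ α := by
    rw [Real.rpow_mul (abs_nonneg w), Real.rpow_two, sq_abs]
  set u := x ^ 2 / (4 * r) with hu
  have hu0 : 0 ≤ u := by positivity
  have h1 : u ^ α ≤ exp u := by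
    calc u ^ α ≤ (1 + u) ^ α := Real.rpow_le_rpow hu0 (by linarith) hα.le
      _ ≤ (1 + u) ^ (1 : ℝ) := Real.rpow_le_rpow_of_exponent_le (by linarith) (by linarith)
      _ = u + 1 := by rw [Real.rpow_one, add_comm]
      _ ≤ exp u := Real.add_one_le_exp u
  have h2 : (4 * r) ^ α ≤ 2 * |y| ^ (2 * α) := by
    have h4 : (4 : ℝ) ^ α ≤ 2 := by
      calc (4 : ℝ) ^ α ≤ (4 : ℝ) ^ (1 / 2 : ℝ) :=
            Real.rpow_le_rpow_of_exponent_le (by norm_num) hα'.le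
        _ = 2 := by
          rw [← Real.sqrt_eq_rpow, show (4 : ℝ) = 2 ^ 2 by norm_num,
            Real.sqrt_sq (by norm_num)]
    rw [Real.mul_rpow (by norm_num) hr.le, hsq]
    have := Real.rpow_le_rpow hr.le hry hα.le
    gcongr
  have h3 : |x| ^ (2 * α) = (4 * r) ^ α * u ^ α := by
    rw [hsq, ← Real.mul_rpow (by positivity) hu0, hu]
    congr 1
    field_simp
  have h5 : exp u * exp (-(x ^ 2) / (2 * r)) = exp (-(1 / (4 * r)) * x ^ 2) := by
    rw [← Real.exp_add, hu]
    congr 1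
    field_simp
    ring
  calc |x| ^ (2 * α) * exp (-(x ^ 2) / (2 * r))
      = (4 * r) ^ α * u ^ α * exp (-(x ^ 2) / (2 * r)) := by rw [h3]
    _ ≤ 2 * |y| ^ (2 * α) * exp u * exp (-(x ^ 2) / (2 * r)) := by gcongr
    _ = _ := by rw [mul_assoc, h5]

lemma inner_integral_le {α r y : ℝ} (hα : 0 < α) (hα' : α < 1 / 2) (hr : 0 < r)
    (hry : r ≤ y ^ 2) :
    (∫ z : ℝ, (gaussianHeatKernel r (z - y) ^ 2 + gaussianHeatKernel r z ^ 2) * |z| ^ (2 * α))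
      ≤ 5 / 2 * |y| ^ (2 * α) * r ^ (-(1 / 2) : ℝ) := by
  set b := 1 / (4 * r) with hb
  have hb0 : 0 < b := by positivity
  have hg : Integrable fun z : ℝ => exp (-b * z ^ 2) := integrable_exp_neg_mul_sq hb0
  have hgy : Integrable fun z : ℝ => exp (-b * (z - y) ^ 2) := hg.comp_sub_right y
  set K := (4 * π * r)⁻¹ * |y| ^ (2 * α) with hK
  have hle : ∀ z : ℝ,
      (gaussianHeatKernel r (z - y) ^ 2 + gaussianHeatKernel r z ^ 2) * |z| ^ (2 * α) ≤
        3 * K * exp (-b * (z - y) ^ 2) + 2 * K * exp (-b * z ^ 2) := by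
    intro z
    have hz : |z| ^ (2 * α) ≤ |z - y| ^ (2 * α) + |y| ^ (2 * α) := by
      calc |z| ^ (2 * α) ≤ (|z - y| + |y|) ^ (2 * α) := by
            refine Real.rpow_le_rpow (abs_nonneg z) ?_ (by linarith)
            simpa using abs_add_le (z - y) y
        _ ≤ _ := Real.rpow_add_le_add_rpow (abs_nonneg _) (abs_nonneg _)
            (by linarith) (by linarith)
    have h1 := abs_rpow_mul_exp_le hα hα' hr hry (z - y)
    have h2 := abs_rpow_mul_exp_le hα hα' hr hry z
    have h3 : exp (-((z - y) ^ 2) / (2 * r)) ≤ exp (-b * (z - y) ^ 2) := by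
      apply Real.exp_le_exp.mpr
      have e : -((z - y) ^ 2) / (2 * r) = 2 * (-b * (z - y) ^ 2) := by
        rw [hb]; field_simp; norm_num
      rw [e]
      have : 0 ≤ b * (z - y) ^ 2 := by positivity
      linarith
    have h4 : exp (-((z - y) ^ 2) / (2 * r)) * |z| ^ (2 * α) ≤
        3 * |y| ^ (2 * α) * exp (-b * (z - y) ^ 2) := by
      have h5 := mul_le_mul_of_nonneg_left hz (Real.exp_nonneg (-((z - y) ^ 2) / (2 * r)))
      have h6 := mul_le_mul_of_nonneg_left h3
        (Real.rpow_nonneg (abs_nonneg y) (2 * α))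
      linarith
    have h7 := add_le_add h4 h2
    have hc : 0 ≤ (4 * π * r)⁻¹ := by positivity
    have h8 := mul_le_mul_of_nonneg_left h7 hc
    rw [gaussianHeatKernel_sq hr, gaussianHeatKernel_sq hr, hK]
    linarith
  have hpi : (4 * π * r)⁻¹ * √(π / b) ≤ 1 / 2 * r ^ (-(1 / 2) : ℝ) := by
    have e1 : π / b = 4 * π * r := by rw [hb]; field_simp
    have e2 : r ^ (-(1 / 2) : ℝ) = (√r)⁻¹ := by
      rw [Real.rpow_neg hr.le, Real.sqrt_eq_rpow]
    have hs : 2 * √r ≤ √(4 * π * r) := by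
      apply Real.le_sqrt_of_sq_le
      rw [mul_pow, Real.sq_sqrt hr.le]
      nlinarith [Real.pi_gt_three]
    have hsr : 0 < √r := Real.sqrt_pos.mpr hr
    have e3 : (4 * π * r)⁻¹ * √(4 * π * r) = (√(4 * π * r))⁻¹ := by
      have h0 : 0 < √(4 * π * r) := by positivity
      nth_rewrite 1 [← Real.mul_self_sqrt (show 0 ≤ 4 * π * r by positivity)]
      field_simp
    rw [e1, e2, e3]
    calc (√(4 * π * r))⁻¹ ≤ (2 * √r)⁻¹ := inv_anti₀ (by positivity) hs
      _ = 1 / 2 * (√r)⁻¹ := by rw [mul_inv]; norm_num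
  calc _ ≤ ∫ z : ℝ, (3 * K * exp (-b * (z - y) ^ 2) + 2 * K * exp (-b * z ^ 2)) := by
        refine integral_mono_of_nonneg (.of_forall fun z => by positivity)
          ((hgy.const_mul _).add (hg.const_mul _)) (.of_forall hle)
    _ = 5 * |y| ^ (2 * α) * ((4 * π * r)⁻¹ * √(π / b)) := by
        rw [integral_add (hgy.const_mul _) (hg.const_mul _), integral_const_mul,
          integral_const_mul, integral_sub_right_eq_self (fun z : ℝ => exp (-b * z ^ 2)) y,
          integral_gaussian, hK]
        ring
    _ ≤ 5 * |y| ^ (2 * α) * (1 / 2 * r ^ (-(1 / 2) : ℝ)) := by gcongr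
    _ = _ := by ring

/-- **Bound on the term `I_{2,1}`** in the proof of Lemma 4.2(ii) of Hairer–Weber.
Let `α ∈ (0, 1/2)`.  There is `C` such that for all `t > 0` and `y ∈ ℝ`:
`∫_{max(t-y²,0)}^{t} ∫_ℝ (p_{t-s}(z-y)² + p_{t-s}(z)²) |z|^{2α} dz ds ≤ C |y|^{1+2α}`. -/
theorem gaussian_heat_kernel_I21_bound (α : ℝ) (hα : 0 < α) (hα' : α < 1 / 2) :
    ∃ C : ℝ, ∀ t : ℝ, 0 < t → ∀ y : ℝ,
      (∫ s in (max (t - y ^ 2) 0)..t, ∫ z : ℝ,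
          ((gaussianHeatKernel (t - s) (z - y)) ^ 2 + (gaussianHeatKernel (t - s) z) ^ 2)
            * |z| ^ (2 * α))
        ≤ C * |y| ^ (1 + 2 * α) := by
  refine ⟨5, fun t ht y => ?_⟩
  -- Substituting `r = t - s` moves the singularity to the left endpoint `0`.
  rw [intervalIntegral.integral_comp_sub_left (fun r => ∫ z : ℝ,
    ((gaussianHeatKernel r (z - y)) ^ 2 + (gaussianHeatKernel r z) ^ 2) * |z| ^ (2 * α)) t,
    sub_self]
  set m := t - max (t - y ^ 2) 0 with hm
  have hm0 : 0 ≤ m := by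
    have : max (t - y ^ 2) 0 ≤ t := max_le (by nlinarith [sq_nonneg y]) ht.le
    linarith
  have hmy : m ≤ y ^ 2 := by
    have := le_max_left (t - y ^ 2) 0
    linarith
  have hint : IntervalIntegrable
      (fun r : ℝ => 5 / 2 * |y| ^ (2 * α) * r ^ (-(1 / 2) : ℝ)) volume 0 m :=
    (intervalIntegral.intervalIntegrable_rpow' (by norm_num)).const_mul _
  calc _ ≤ ∫ r in (0 : ℝ)..m, 5 / 2 * |y| ^ (2 * α) * r ^ (-(1 / 2) : ℝ) := by
        rw [intervalIntegral.integral_of_le hm0, intervalIntegral.integral_of_le hm0]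
        -- Only the majorant has to be integrable: the integrand is nonnegative, and a
        -- nonintegrable function has Bochner integral `0`.
        refine integral_mono_of_nonneg
          (.of_forall fun r => integral_nonneg fun z => by positivity) hint.1 ?_
        refine (ae_restrict_iff' measurableSet_Ioc).mpr (.of_forall fun r hr => ?_)
        exact inner_integral_le hα hα' hr.1 (hr.2.trans hmy)
    _ = 5 * |y| ^ (2 * α) * √m := by
        rw [intervalIntegral.integral_const_mul, integral_rpow (Or.inl (by norm_num)),
          Real.sqrt_eq_rpow]
        norm_num
        ring
    _ ≤ 5 * |y| ^ (2 * α) * |y| := by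
        have : √m ≤ |y| := by
          rw [← Real.sqrt_sq_eq_abs]
          exact Real.sqrt_le_sqrt hmy
        gcongr
    _ = 5 * |y| ^ (1 + 2 * α) := by
        rw [Real.rpow_add_of_nonneg (abs_nonneg y) (by norm_num) (by linarith), Real.rpow_one]
        ring
end

section
/- (Smoothness of the remainder of the periodic heat kernel; decomposition p̂_t = p_t + p_t^R used repeatedly in Section 4.) Fix T > 0 and an integer n ≥ 0. Then sup over t ∈ (0,T] and z ∈ [−3/4, 3/4] of | ∂_z^n ( Σ_{k∈ℤ, k≠0} p_t(z−k) ) | is finite; that is, the remainder p_t^R(z) := p̂_t(z) − p_t(z) is a smooth function of z on [−3/4,3/4] whose derivatives of every order are bounded uniformly over t ∈ (0,T]. -/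
/-!
With `γ(y) = exp(-y²/2)` and `a = √(2t)`, the heat kernel is the rescaling
`p_t(x) = (2π)^{-1/2} a⁻¹ γ(x/a)`, so that `∂ⁿ p_t(x) = (2π)^{-1/2} a^{-(n+1)} γ⁽ⁿ⁾(x/a)`.
Since `γ⁽ⁿ⁾` is a Hermite polynomial times `γ`, the function `|y|^{n+2} |γ⁽ⁿ⁾(y)|` is bounded
(`exists_bound_iteratedDeriv_gauss`), and hence `|∂ⁿ p_t(x)| ≤ C a / |x|^{n+2}`: the negative powers
of `a` are absorbed by the decay in `x`. If `|z| < 7/8` and `k ≠ 0` then `|z - k| ≥ |k|/8`, so the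
`n`-th derivatives of the summands are dominated on the open interval `(-7/8, 7/8)`, uniformly in
`t ∈ (0, T]`, by a multiple of the summable sequence `|k|^{-(n+2)}`
(`exists_bound_heatDeriv`). Termwise differentiation (`iteratedDeriv_tsum_of_bounds`,
`contDiffOn_tsum_of_bounds`) then yields both smoothness and the uniform bound. The interval is
taken larger than `[-3/4, 3/4]` so that two-sided derivatives at the end points are covered.
-/

open MeasureTheory Real

section TermwiseDifferentiation

variable {ι : Type*} {f : ι → ℕ → ℝ → ℝ} {u : ℕ → ι → ℝ} {U : Set ℝ}

/-- One step of termwise differentiation, where `f i n` plays the role of the `n`-th derivative of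
the `i`-th summand and `u n` is a summable majorant of `f · n` on `U`. -/
lemma hasDerivAt_tsum_of_bounds (hU : IsOpen U) (hU' : IsPreconnected U)
    (hf : ∀ i n, ∀ x ∈ U, HasDerivAt (f i n) (f i (n + 1) x) x)
    (hu : ∀ n, Summable (u n)) (hb : ∀ i n, ∀ x ∈ U, |f i n x| ≤ u n i)
    (n : ℕ) {x : ℝ} (hx : x ∈ U) :
    HasDerivAt (fun z => ∑' i, f i n z) (∑' i, f i (n + 1) x) x :=
  hasDerivAt_tsum_of_isPreconnected (hu (n + 1)) hU hU' (fun i y hy => hf i n y hy)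
    (fun i y hy => hb i (n + 1) y hy) hx
    (Summable.of_norm_bounded (hu n) fun i => hb i n x hx) hx

lemma iteratedDeriv_tsum_of_bounds (hU : IsOpen U) (hU' : IsPreconnected U)
    (hf : ∀ i n, ∀ x ∈ U, HasDerivAt (f i n) (f i (n + 1) x) x)
    (hu : ∀ n, Summable (u n)) (hb : ∀ i n, ∀ x ∈ U, |f i n x| ≤ u n i)
    (n : ℕ) {x : ℝ} (hx : x ∈ U) :
    iteratedDeriv n (fun z => ∑' i, f i 0 z) x = ∑' i, f i n x := by
  induction n generalizing x with
  | zero => simp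
  | succ n ih =>
    rw [iteratedDeriv_succ]
    have h : iteratedDeriv n (fun z => ∑' i, f i 0 z) =ᶠ[nhds x] fun z => ∑' i, f i n z := by
      filter_upwards [hU.mem_nhds hx] with y hy using ih hy
    rw [h.deriv_eq]
    exact (hasDerivAt_tsum_of_bounds hU hU' hf hu hb n hx).deriv

lemma contDiffOn_tsum_of_bounds (hU : IsOpen U) (hU' : IsPreconnected U)
    (hf : ∀ i n, ∀ x ∈ U, HasDerivAt (f i n) (f i (n + 1) x) x)
    (hu : ∀ n, Summable (u n)) (hb : ∀ i n, ∀ x ∈ U, |f i n x| ≤ u n i) :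
    ContDiffOn ℝ (⊤ : ℕ∞) (fun z => ∑' i, f i 0 z) U := by
  have key : ∀ m n : ℕ, ContDiffOn ℝ m (fun z => ∑' i, f i n z) U := by
    intro m
    induction m with
    | zero =>
      intro n
      refine contDiffOn_zero.2 fun x hx => ?_
      exact (hasDerivAt_tsum_of_bounds hU hU' hf hu hb n hx).continuousAt.continuousWithinAt
    | succ m ih =>
      intro n
      rw [Nat.cast_succ, contDiffOn_succ_iff_deriv_of_isOpen hU]
      refine ⟨fun x hx => (hasDerivAt_tsum_of_bounds hU hU' hf hu hb n
        hx).differentiableAt.differentiableWithinAt, by simp, ?_⟩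
      exact (ih (n + 1)).congr fun x hx => (hasDerivAt_tsum_of_bounds hU hU' hf hu hb n hx).deriv
  exact contDiffOn_infty.2 fun m => key m 0

end TermwiseDifferentiation

/-- The unnormalised standard Gaussian `γ(y) = exp(-y²/2)`. -/
noncomputable def gauss (y : ℝ) : ℝ := Real.exp (-(y ^ 2 / 2))

lemma hasDerivAt_iteratedDeriv_gauss (n : ℕ) (y : ℝ) :
    HasDerivAt (iteratedDeriv n gauss) (iteratedDeriv (n + 1) gauss y) y := by
  have h : ContDiff ℝ (n + 1) gauss := by unfold gauss; fun_prop
  rw [iteratedDeriv_succ]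
  exact (h.differentiable_iteratedDeriv' n y).hasDerivAt

lemma abs_pow_mul_gauss_le (m : ℕ) (y : ℝ) :
    |y ^ m * gauss y| ≤ 1 + 2 ^ m * (m.factorial : ℝ) := by
  have hg : 0 < gauss y := Real.exp_pos _
  have hg1 : gauss y ≤ 1 := Real.exp_le_one_iff.2 (by nlinarith [sq_nonneg y])
  have h1 : |y| ^ m ≤ 1 + (y ^ 2) ^ m := by
    rw [← sq_abs, ← pow_mul, mul_comm 2 m, pow_mul]
    nlinarith [sq_nonneg (|y| ^ m - 1), sq_nonneg (|y| ^ m)]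
  have h2 : (y ^ 2) ^ m * gauss y ≤ 2 ^ m * (m.factorial : ℝ) := by
    have h := Real.pow_div_factorial_le_exp (x := y ^ 2 / 2) (by positivity) m
    rw [div_le_iff₀ (by positivity), div_pow, div_le_iff₀ (by positivity)] at h
    calc (y ^ 2) ^ m * gauss y
        ≤ (Real.exp (y ^ 2 / 2) * m.factorial * 2 ^ m) * gauss y := by gcongr
      _ = 2 ^ m * (m.factorial : ℝ) * (Real.exp (y ^ 2 / 2) * gauss y) := by ring
      _ = 2 ^ m * (m.factorial : ℝ) := by rw [gauss, ← Real.exp_add]; simp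
  rw [abs_mul, abs_pow, abs_of_pos hg]
  nlinarith

lemma exists_bound_polynomial_mul_gauss (p : Polynomial ℝ) :
    ∃ C : ℝ, ∀ y, |p.eval y * gauss y| ≤ C := by
  induction p using Polynomial.induction_on' with
  | add p q hp hq =>
    obtain ⟨C, hC⟩ := hp
    obtain ⟨D, hD⟩ := hq
    refine ⟨C + D, fun y => ?_⟩
    rw [Polynomial.eval_add, add_mul]
    exact (abs_add_le _ _).trans (add_le_add (hC y) (hD y))
  | monomial m c =>
    refine ⟨|c| * (1 + 2 ^ m * (m.factorial : ℝ)), fun y => ?_⟩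
    rw [Polynomial.eval_monomial, mul_assoc, abs_mul]
    exact mul_le_mul_of_nonneg_left (abs_pow_mul_gauss_le m y) (abs_nonneg c)

lemma exists_bound_iteratedDeriv_gauss (n N : ℕ) :
    ∃ C : ℝ, 0 ≤ C ∧ ∀ y, |y| ^ N * |iteratedDeriv n gauss y| ≤ C := by
  obtain ⟨C, hC⟩ := exists_bound_polynomial_mul_gauss
    (Polynomial.X ^ N * (Polynomial.hermite n).map (Int.castRingHom ℝ))
  refine ⟨C, (abs_nonneg _).trans (hC 0), fun y => ?_⟩
  refine le_trans (le_of_eq ?_) (hC y)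
  have h := Polynomial.deriv_gaussian_eq_hermite_mul_gaussian n y
  rw [← iteratedDeriv_eq_iterate] at h
  change iteratedDeriv n gauss y = _ * gauss y at h
  rw [h]
  simp [abs_mul, Polynomial.aeval_def, Polynomial.eval_map, mul_assoc]

/-- The `n`-th space derivative of the heat kernel, in the scaled form
`(2π)^{-1/2} a^{-(n+1)} γ⁽ⁿ⁾(x/a)` with `a = √(2t)`. -/
noncomputable def heatDeriv (t : ℝ) (n : ℕ) (x : ℝ) : ℝ :=
  (√(2 * Real.pi))⁻¹ * ((√(2 * t))⁻¹ ^ (n + 1) * iteratedDeriv n gauss ((√(2 * t))⁻¹ * x))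

lemma heatDeriv_zero {t : ℝ} (ht : 0 < t) (x : ℝ) :
    heatDeriv t 0 x = gaussianHeatKernel t x := by
  have h1 : √(4 * Real.pi * t) = √(2 * Real.pi) * √(2 * t) := by
    rw [← Real.sqrt_mul (by positivity)]
    ring_nf
  have h2 : √(2 * t) ^ 2 = 2 * t := Real.sq_sqrt (by positivity)
  have h3 : -(((√(2 * t))⁻¹ * x) ^ 2 / 2) = -(x ^ 2) / (4 * t) := by
    rw [mul_pow, inv_pow, h2]
    field_simp
    ring
  rw [heatDeriv, gaussianHeatKernel, h1, iteratedDeriv_zero, gauss, h3, mul_inv, zero_add, pow_one,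
    mul_assoc]

lemma hasDerivAt_heatDeriv (t : ℝ) (n : ℕ) (x : ℝ) :
    HasDerivAt (heatDeriv t n) (heatDeriv t (n + 1) x) x := by
  have h1 : HasDerivAt (fun x : ℝ => (√(2 * t))⁻¹ * x) ((√(2 * t))⁻¹) x := by
    simpa using (hasDerivAt_id x).const_mul ((√(2 * t))⁻¹)
  have h2 := (((hasDerivAt_iteratedDeriv_gauss n _).comp x h1).const_mul
    ((√(2 * t))⁻¹ ^ (n + 1))).const_mul ((√(2 * Real.pi))⁻¹)
  refine h2.congr_deriv ?_
  rw [heatDeriv]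
  ring

/-- For `|z| < 7/8` and `k ≠ 0` the point `z - k` stays away from the singularity at the origin by
a fixed multiple of `|k|`. -/
lemma abs_int_div_le_abs_sub {z : ℝ} (hz : z ∈ Set.Ioo (-(7 / 8) : ℝ) (7 / 8)) {k : ℤ}
    (hk : k ≠ 0) : |(k : ℝ)| / 8 ≤ |z - k| := by
  have h1 : (1 : ℝ) ≤ |(k : ℝ)| := by exact_mod_cast Int.one_le_abs hk
  have h2 : |z| ≤ 7 / 8 := abs_le.2 ⟨hz.1.le, hz.2.le⟩
  have h3 := abs_sub_abs_le_abs_sub (k : ℝ) z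
  rw [abs_sub_comm] at h3
  linarith

lemma exists_bound_heatDeriv (T : ℝ) (n : ℕ) :
    ∃ C : ℝ, ∀ t ∈ Set.Ioc (0 : ℝ) T, ∀ k : {k : ℤ // k ≠ 0},
      ∀ z ∈ Set.Ioo (-(7 / 8) : ℝ) (7 / 8),
        |heatDeriv t n (z - ((k : ℤ) : ℝ))| ≤ C * |1 / ((k : ℤ) : ℝ) ^ (n + 2)| := by
  obtain ⟨C, hC0, hC⟩ := exists_bound_iteratedDeriv_gauss n (n + 2)
  refine ⟨(√(2 * Real.pi))⁻¹ * (√(2 * T) * C * 8 ^ (n + 2)), fun t ht ⟨k, hk⟩ z hz => ?_⟩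
  have ha : 0 < √(2 * t) := Real.sqrt_pos.2 (by linarith [ht.1])
  have haT : √(2 * t) ≤ √(2 * T) := Real.sqrt_le_sqrt (by linarith [ht.2])
  have hk0 : 0 < |(k : ℝ)| := abs_pos.2 (by exact_mod_cast hk)
  have hkx := abs_int_div_le_abs_sub hz hk
  dsimp only
  set a := √(2 * t)
  set x := z - (k : ℝ)
  have hx : 0 < |x| := lt_of_lt_of_le (by positivity) hkx
  have h := hC (a⁻¹ * x)
  rw [abs_mul, abs_inv, abs_of_pos ha] at h
  set D := |iteratedDeriv n gauss (a⁻¹ * x)|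
  have hD : 0 ≤ D := abs_nonneg _
  rw [heatDeriv, abs_mul, abs_mul, abs_of_nonneg (by positivity : 0 ≤ (√(2 * Real.pi))⁻¹),
    abs_of_nonneg (by positivity : 0 ≤ a⁻¹ ^ (n + 1)), mul_assoc]
  refine mul_le_mul_of_nonneg_left ?_ (by positivity)
  rw [abs_div, abs_one, abs_pow, mul_one_div, le_div_iff₀ (by positivity)]
  calc a⁻¹ ^ (n + 1) * D * |(k : ℝ)| ^ (n + 2)
      = a⁻¹ ^ (n + 1) * D * (8 ^ (n + 2) * (|(k : ℝ)| / 8) ^ (n + 2)) := by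
        rw [← mul_pow]; congr 2; ring
    _ ≤ a⁻¹ ^ (n + 1) * D * (8 ^ (n + 2) * |x| ^ (n + 2)) := by gcongr
    _ = a * ((a⁻¹ * |x|) ^ (n + 2) * D) * 8 ^ (n + 2) := by
        rw [mul_pow, pow_succ a⁻¹ (n + 1)]; field_simp
    _ ≤ √(2 * T) * C * 8 ^ (n + 2) := by gcongr

lemma summable_abs_inv_int_pow (n : ℕ) :
    Summable fun k : {k : ℤ // k ≠ 0} => |1 / ((k : ℤ) : ℝ) ^ (n + 2)| :=
  (Real.summable_one_div_int_pow.2 (by omega : 1 < n + 2)).abs.comp_injective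
    Subtype.val_injective

/-- **Smoothness of the remainder of the periodic heat kernel**: the decomposition
`p̂_t = p_t + p_t^R` used repeatedly in Section 4 of Hairer–Weber.  Fix `T > 0` and
`n : ℕ`.  The remainder `p_t^R(z) = Σ_{k ≠ 0} p_t(z-k)` is a smooth function of `z`
on `[-3/4, 3/4]`, and its `n`-th derivative is bounded uniformly over `t ∈ (0,T]` and
`z ∈ [-3/4, 3/4]`. -/
theorem periodic_heat_kernel_remainder_smooth (T : ℝ) (hT : 0 < T) (n : ℕ) :
    (∀ t ∈ Set.Ioc (0 : ℝ) T,
      ContDiffOn ℝ (⊤ : ℕ∞)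
        (fun z : ℝ => ∑' k : {k : ℤ // k ≠ 0}, gaussianHeatKernel t (z - ((k : ℤ) : ℝ)))
        (Set.Icc (-(3 / 4) : ℝ) (3 / 4))) ∧
    ∃ M : ℝ, ∀ t ∈ Set.Ioc (0 : ℝ) T, ∀ z ∈ Set.Icc (-(3 / 4) : ℝ) (3 / 4),
      |iteratedDeriv n
          (fun w : ℝ => ∑' k : {k : ℤ // k ≠ 0}, gaussianHeatKernel t (w - ((k : ℤ) : ℝ)))
          z| ≤ M := by
  choose C hC using exists_bound_heatDeriv T
  have hsum : ∀ n, Summable fun k : {k : ℤ // k ≠ 0} =>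
      C n * |1 / ((k : ℤ) : ℝ) ^ (n + 2)| := fun n => (summable_abs_inv_int_pow n).mul_left _
  have hder : ∀ t : ℝ, ∀ (k : {k : ℤ // k ≠ 0}) (n : ℕ), ∀ z ∈ Set.Ioo (-(7 / 8) : ℝ) (7 / 8),
      HasDerivAt (fun w => heatDeriv t n (w - ((k : ℤ) : ℝ)))
        (heatDeriv t (n + 1) (z - ((k : ℤ) : ℝ))) z := fun t k n z _ =>
    (hasDerivAt_heatDeriv t n _).comp_sub_const z _
  have hsub : Set.Icc (-(3 / 4) : ℝ) (3 / 4) ⊆ Set.Ioo (-(7 / 8) : ℝ) (7 / 8) :=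
    Set.Icc_subset_Ioo (by norm_num) (by norm_num)
  have hfun : ∀ t ∈ Set.Ioc (0 : ℝ) T,
      (fun z : ℝ => ∑' k : {k : ℤ // k ≠ 0}, gaussianHeatKernel t (z - ((k : ℤ) : ℝ))) =
        fun z : ℝ => ∑' k : {k : ℤ // k ≠ 0}, heatDeriv t 0 (z - ((k : ℤ) : ℝ)) := by
    intro t ht
    simp only [heatDeriv_zero ht.1]
  refine ⟨fun t ht => ?_, ∑' k : {k : ℤ // k ≠ 0}, C n * |1 / ((k : ℤ) : ℝ) ^ (n + 2)|,
    fun t ht z hz => ?_⟩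
  · rw [hfun t ht]
    exact (contDiffOn_tsum_of_bounds
      (f := fun (k : {k : ℤ // k ≠ 0}) n w => heatDeriv t n (w - ((k : ℤ) : ℝ)))
      isOpen_Ioo isPreconnected_Ioo (hder t) hsum (fun k n => hC n t ht k)).mono hsub
  · rw [hfun t ht, iteratedDeriv_tsum_of_bounds
      (f := fun (k : {k : ℤ // k ≠ 0}) n w => heatDeriv t n (w - ((k : ℤ) : ℝ)))
      isOpen_Ioo isPreconnected_Ioo (hder t) hsum (fun k n => hC n t ht k) n (hsub hz)]
    rw [← Real.norm_eq_abs]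
    exact tsum_of_norm_bounded (hsum n).hasSum fun k => hC n t ht k z (hsub hz)
end

section
/- (Remainder bound for compositions, third bound in (eq:comp-reg-func1) of Lemma 5.4.) Let α ∈ (0, 1/2], let g : ℝᵐ → ℝᵏ be twice continuously differentiable with bounded derivatives. Let X : [0,1] → ℝⁿ, Ψ : [0,1] → ℝᵐ, Ψ′ : [0,1] → ℝ^{m×n} and R_Ψ : [0,1]² → ℝᵐ satisfy the controlled-path decomposition Ψ(y) − Ψ(x) = Ψ′(x)(X(y)−X(x)) + R_Ψ(x,y) for all x,y ∈ [0,1], with |Ψ|_α < ∞ and |R_Ψ|_{2α} < ∞, and let w : [0,1] → ℝᵐ with |w|_{2α} < ∞. Define Y := g(Ψ + w), Y′(x) := Dg(Ψ(x)+w(x)) ∘ Ψ′(x), and R_Y(x,y) := Y(y) − Y(x) − Y′(x)(X(y)−X(x)). Then |R_Y|_{2α} ≤ |Dg|₀ |w|_{2α} + |D²g|₀ |Ψ|_α² + |Dg|₀ |R_Ψ|_{2α}. -/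
/-!
The remainder of `Y = g(Ψ + w)` splits, by the decomposition of `Ψ`, into three terms:
`g(Ψ(y) + w(y)) - g(Ψ(y) + w(x))`, bounded by the mean value inequality in terms of the increment
of `w`; the first-order Taylor remainder of `g` between `Ψ(x) + w(x)` and `Ψ(y) + w(x)`, which is
quadratic in the increment of `Ψ` (`norm_taylor_le`) and so has Hölder exponent `2α`; and
`Dg(Ψ(x) + w(x))` applied to `RΨ(x, y)`. Freezing `w` at `x` in the Taylor step is what prevents a
contribution of `w` to the quadratic term.
-/

open scoped ENNReal NNReal

/-- `γ`-Hölder seminorm over `[0,1]`, valued in `ℝ≥0∞`. -/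
noncomputable def eHolderIcc {E : Type*} [NormedAddCommGroup E] (γ : ℝ) (f : ℝ → E) :
    ℝ≥0∞ :=
  ⨆ p : Set.Icc (0 : ℝ) 1 × Set.Icc (0 : ℝ) 1,
    (‖f p.2 - f p.1‖₊ : ℝ≥0∞) / edist (p.1 : ℝ) (p.2 : ℝ) ^ γ

/-- `γ`-seminorm of a two-parameter remainder over `[0,1]²`, valued in `ℝ≥0∞`. -/
noncomputable def eHolderIcc₂ {E : Type*} [NormedAddCommGroup E] (γ : ℝ)
    (R : ℝ → ℝ → E) : ℝ≥0∞ :=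
  ⨆ p : Set.Icc (0 : ℝ) 1 × Set.Icc (0 : ℝ) 1,
    (‖R p.1 p.2‖₊ : ℝ≥0∞) / edist (p.1 : ℝ) (p.2 : ℝ) ^ γ

/-- First-order Taylor bound, with constant `1` instead of the optimal `1 / 2`: the mean value
inequality applied to `g - Dg(a)` on the segment from `a` to `b`. -/
lemma norm_taylor_le {E F : Type*} [NormedAddCommGroup E] [NormedSpace ℝ E]
    [NormedAddCommGroup F] [NormedSpace ℝ F] {g : E → F} (hg : ContDiff ℝ 2 g) {C : ℝ}
    (hC : ∀ v, ‖fderiv ℝ (fderiv ℝ g) v‖ ≤ C) (a b : E) :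
    ‖g b - g a - fderiv ℝ g a (b - a)‖ ≤ C * ‖b - a‖ ^ 2 := by
  have hC0 : 0 ≤ C := le_trans (norm_nonneg (fderiv ℝ (fderiv ℝ g) a)) (hC a)
  have hd : Differentiable ℝ g := hg.differentiable (by norm_num)
  have hd2 : Differentiable ℝ (fderiv ℝ g) :=
    (hg.fderiv_right (m := 1) (by norm_num)).differentiable (by norm_num)
  have key : ∀ z ∈ segment ℝ a b, ‖fderiv ℝ g z - fderiv ℝ g a‖ ≤ C * ‖b - a‖ := by
    intro z hz
    refine (convex_univ.norm_image_sub_le_of_norm_fderiv_le (fun x _ => hd2 x)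
      (fun x _ => hC x) (Set.mem_univ a) (Set.mem_univ z)).trans ?_
    gcongr
    obtain ⟨t, ⟨ht0, ht1⟩, rfl⟩ := (segment_eq_image' ℝ a b).le hz
    rw [add_sub_cancel_left, norm_smul, Real.norm_of_nonneg ht0]
    exact mul_le_of_le_one_left (norm_nonneg _) ht1
  have h := (convex_segment a b).norm_image_sub_le_of_norm_fderiv_le'
    (fun x _ => hd x) key (left_mem_segment ℝ a b) (right_mem_segment ℝ a b)
  rwa [mul_assoc, ← sq] at h

lemma enorm_sub_le_eHolderIcc {E : Type*} [NormedAddCommGroup E] {γ : ℝ} {f : ℝ → E} {x y : ℝ}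
    (hx : x ∈ Set.Icc (0 : ℝ) 1) (hy : y ∈ Set.Icc (0 : ℝ) 1) (hxy : x ≠ y) :
    (‖f y - f x‖₊ : ℝ≥0∞) ≤ eHolderIcc γ f * edist x y ^ γ := by
  have hd : 0 < edist x y := edist_pos.2 hxy
  rw [← ENNReal.div_le_iff (ENNReal.rpow_pos hd (edist_ne_top x y)).ne'
    (ENNReal.rpow_ne_top_of_ne_zero hd.ne' (edist_ne_top x y))]
  exact le_iSup (fun p : Set.Icc (0 : ℝ) 1 × Set.Icc (0 : ℝ) 1 =>
    (‖f p.2 - f p.1‖₊ : ℝ≥0∞) / edist (p.1 : ℝ) (p.2 : ℝ) ^ γ) (⟨x, hx⟩, ⟨y, hy⟩)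

lemma enorm_le_eHolderIcc₂ {E : Type*} [NormedAddCommGroup E] {γ : ℝ} {R : ℝ → ℝ → E} {x y : ℝ}
    (hx : x ∈ Set.Icc (0 : ℝ) 1) (hy : y ∈ Set.Icc (0 : ℝ) 1) (hxy : x ≠ y) :
    (‖R x y‖₊ : ℝ≥0∞) ≤ eHolderIcc₂ γ R * edist x y ^ γ := by
  have hd : 0 < edist x y := edist_pos.2 hxy
  rw [← ENNReal.div_le_iff (ENNReal.rpow_pos hd (edist_ne_top x y)).ne'
    (ENNReal.rpow_ne_top_of_ne_zero hd.ne' (edist_ne_top x y))]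
  exact le_iSup (fun p : Set.Icc (0 : ℝ) 1 × Set.Icc (0 : ℝ) 1 =>
    (‖R p.1 p.2‖₊ : ℝ≥0∞) / edist (p.1 : ℝ) (p.2 : ℝ) ^ γ) (⟨x, hx⟩, ⟨y, hy⟩)

/-- **Remainder bound for compositions**: the third bound in (eq:comp-reg-func1) of
Lemma 5.4 of Hairer–Weber.  If `Ψ` is controlled by `X` with derivative `Ψ'` and
remainder `R_Ψ`, then `Y = g(Ψ + w)` is controlled by `X` with derivative
`Y'(x) = Dg(Ψ(x)+w(x)) ∘ Ψ'(x)`, and the remainder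
`R_Y(x,y) = Y(y) - Y(x) - Y'(x)(X(y)-X(x))` satisfies
`|R_Y|_{2α} ≤ |Dg|₀ |w|_{2α} + |D²g|₀ |Ψ|_α² + |Dg|₀ |R_Ψ|_{2α}`. -/
theorem composition_remainder_bound (m n k : ℕ) (α : ℝ) (hα : 0 < α) (hα' : α ≤ 1 / 2)
    (g : EuclideanSpace ℝ (Fin m) → EuclideanSpace ℝ (Fin k)) (hg : ContDiff ℝ 2 g)
    (hg1 : (⨆ v, (‖fderiv ℝ g v‖₊ : ℝ≥0∞)) < ⊤)
    (hg2 : (⨆ v, (‖fderiv ℝ (fderiv ℝ g) v‖₊ : ℝ≥0∞)) < ⊤)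
    (X : ℝ → EuclideanSpace ℝ (Fin n))
    (Ψ w : ℝ → EuclideanSpace ℝ (Fin m))
    (Ψ' : ℝ → EuclideanSpace ℝ (Fin n) →L[ℝ] EuclideanSpace ℝ (Fin m))
    (RΨ : ℝ → ℝ → EuclideanSpace ℝ (Fin m))
    (hdec : ∀ x ∈ Set.Icc (0 : ℝ) 1, ∀ y ∈ Set.Icc (0 : ℝ) 1,
      Ψ y - Ψ x = Ψ' x (X y - X x) + RΨ x y)
    (hΨ : eHolderIcc α Ψ < ⊤) (hRΨ : eHolderIcc₂ (2 * α) RΨ < ⊤)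
    (hw : eHolderIcc (2 * α) w < ⊤) :
    eHolderIcc₂ (2 * α)
        (fun x y => g (Ψ y + w y) - g (Ψ x + w x) -
          ((fderiv ℝ g (Ψ x + w x)).comp (Ψ' x)) (X y - X x))
      ≤ (⨆ v, (‖fderiv ℝ g v‖₊ : ℝ≥0∞)) * eHolderIcc (2 * α) w +
        (⨆ v, (‖fderiv ℝ (fderiv ℝ g) v‖₊ : ℝ≥0∞)) * (eHolderIcc α Ψ) ^ 2 +
        (⨆ v, (‖fderiv ℝ g v‖₊ : ℝ≥0∞)) * eHolderIcc₂ (2 * α) RΨ := by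
  refine iSup_le ?_
  rintro ⟨⟨x, hx⟩, ⟨y, hy⟩⟩
  dsimp only
  rcases eq_or_ne x y with rfl | hxy
  -- On the diagonal the numerator vanishes, so the quotient is `0 / 0 = 0`.
  · simp
  have hWb := enorm_sub_le_eHolderIcc (γ := 2 * α) (f := w) hx hy hxy
  have hPb := enorm_sub_le_eHolderIcc (γ := α) (f := Ψ) hx hy hxy
  have hRb := enorm_le_eHolderIcc₂ (γ := 2 * α) (R := RΨ) hx hy hxy
  have hb1 := le_iSup (fun v => (‖fderiv ℝ g v‖₊ : ℝ≥0∞))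
  have hb2 := le_iSup (fun v => (‖fderiv ℝ (fderiv ℝ g) v‖₊ : ℝ≥0∞))
  have hd : 0 < edist x y := edist_pos.2 hxy
  rw [ENNReal.div_le_iff (ENNReal.rpow_pos hd (edist_ne_top x y)).ne'
    (ENNReal.rpow_ne_top_of_ne_zero hd.ne' (edist_ne_top x y))]
  generalize (⨆ v, (‖fderiv ℝ g v‖₊ : ℝ≥0∞)) = A at *
  generalize (⨆ v, (‖fderiv ℝ (fderiv ℝ g) v‖₊ : ℝ≥0∞)) = B at *
  lift A to ℝ≥0 using hg1.ne
  lift B to ℝ≥0 using hg2.ne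
  have hA : ∀ v, ‖fderiv ℝ g v‖ ≤ A := fun v => by exact_mod_cast hb1 v
  have hB : ∀ v, ‖fderiv ℝ (fderiv ℝ g) v‖ ≤ B := fun v => by exact_mod_cast hb2 v
  have h1 : ‖g (Ψ y + w y) - g (Ψ y + w x)‖ ≤ A * ‖w y - w x‖ := by
    have h := convex_univ.norm_image_sub_le_of_norm_fderiv_le
      (fun v _ => hg.differentiable (by norm_num) v) (fun v _ => hA v)
      (Set.mem_univ (Ψ y + w x)) (Set.mem_univ (Ψ y + w y))
    rwa [add_sub_add_left_eq_sub] at h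
  have h2 := norm_taylor_le hg hB (Ψ x + w x) (Ψ y + w x)
  rw [add_sub_add_right_eq_sub] at h2
  have h3 : ‖fderiv ℝ g (Ψ x + w x) (RΨ x y)‖ ≤ A * ‖RΨ x y‖ :=
    (fderiv ℝ g (Ψ x + w x)).le_of_opNorm_le (hA _) _
  have hsplit : g (Ψ y + w y) - g (Ψ x + w x) -
      ((fderiv ℝ g (Ψ x + w x)).comp (Ψ' x)) (X y - X x) =
      (g (Ψ y + w y) - g (Ψ y + w x)) +
      (g (Ψ y + w x) - g (Ψ x + w x) - fderiv ℝ g (Ψ x + w x) (Ψ y - Ψ x)) +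
      fderiv ℝ g (Ψ x + w x) (RΨ x y) := by
    rw [hdec x hx y hy, map_add, ContinuousLinearMap.comp_apply]
    abel
  have hreal : ‖g (Ψ y + w y) - g (Ψ x + w x) -
      ((fderiv ℝ g (Ψ x + w x)).comp (Ψ' x)) (X y - X x)‖₊ ≤
      A * ‖w y - w x‖₊ + B * ‖Ψ y - Ψ x‖₊ ^ 2 + A * ‖RΨ x y‖₊ := by
    rw [hsplit, ← NNReal.coe_le_coe]
    push_cast
    exact norm_add₃_le.trans (by gcongr)
  have hpow : edist x y ^ (2 * α) = (edist x y ^ α) ^ 2 := by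
    rw [mul_comm, ENNReal.rpow_mul, ENNReal.rpow_two]
  calc _ ≤ (A : ℝ≥0∞) * ‖w y - w x‖₊ + B * (‖Ψ y - Ψ x‖₊ : ℝ≥0∞) ^ 2 + A * ‖RΨ x y‖₊ := by
        exact_mod_cast hreal
    _ ≤ A * (eHolderIcc (2 * α) w * edist x y ^ (2 * α)) +
        B * (eHolderIcc α Ψ * edist x y ^ α) ^ 2 +
        A * (eHolderIcc₂ (2 * α) RΨ * edist x y ^ (2 * α)) := by gcongr
    _ = _ := by rw [hpow]; ring
end
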